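/- arXiv:2604.13913 — 2 statements merged into one kernel-verified Lean document; each statement's English description precedes it below -/
import Mathlib

section
/- Let b > 1 and β ∈ (0, 1/2). For almost every pair of phase sequences (Θ, Λ) ∈ [0,1]^ℕ × [0,1]^ℕ (with respect to the infinite product of uniform measures on [0,1]), the Hausdorff dimension of the graph G(f_{Θ,Λ}) = {(t, f_{Θ,Λ}(t)) : t ∈ [0,1]} ⊂ ℝ³ equals 3 − 2β. -/
open MeasureTheory

/-- First coordinate of the random vector-valued Weierstrass function
`t ↦ ∑ b^{-βn} cos(2π(bⁿ t + θₙ))`. -/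
noncomputable def W1 (b β : ℝ) (Θ : ℕ → ℝ) (t : ℝ) : ℝ :=
  ∑' n : ℕ, b ^ (-β * (n : ℝ)) * Real.cos (2 * Real.pi * (b ^ n * t + Θ n))

/-- Second coordinate of the random vector-valued Weierstrass function
`t ↦ ∑ b^{-βn} sin(2π(bⁿ t + λₙ))`. -/
noncomputable def W2 (b β : ℝ) (Λ : ℕ → ℝ) (t : ℝ) : ℝ :=
  ∑' n : ℕ, b ^ (-β * (n : ℝ)) * Real.sin (2 * Real.pi * (b ^ n * t + Λ n))

/-- Euclidean distance `|f_{Θ,Λ}(x) - f_{Θ,Λ}(y)|` in ℝ². -/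
noncomputable def Wdist (b β : ℝ) (Θ Λ : ℕ → ℝ) (x y : ℝ) : ℝ :=
  Real.sqrt ((W1 b β Θ x - W1 b β Θ y) ^ 2 + (W2 b β Λ x - W2 b β Λ y) ^ 2)

/-- The graph `G(f_{Θ,Λ}) = {(t, f_{Θ,Λ}(t)) : t ∈ [0,1]}` inside ℝ³ = ℝ × ℝ². -/
def Wgraph (b β : ℝ) (Θ Λ : ℕ → ℝ) : Set (ℝ × ℝ × ℝ) :=
  {p | ∃ t ∈ Set.Icc (0 : ℝ) 1, p = (t, W1 b β Θ t, W2 b β Λ t)}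

/-- `μ` is the infinite product over `ℕ` of the uniform probability measures on `[0,1]`:
the measure of every measurable cylinder is the corresponding finite product of
uniform measures. -/
def IsUniformProductMeasure (μ : Measure (ℕ → ℝ)) : Prop :=
  ∀ (t : Finset ℕ) (s : ℕ → Set ℝ), (∀ i, MeasurableSet (s i)) →
    μ {f : ℕ → ℝ | ∀ i ∈ t, f i ∈ s i} =
      ∏ i ∈ t, (volume.restrict (Set.Icc (0 : ℝ) 1)) (s i)

/-! ### The common form of both coordinates -/

/-- Weierstrass series with a constant phase shift. -/
noncomputable def VV (b β ψ : ℝ) (Θ : ℕ → ℝ) (t : ℝ) : ℝ :=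
  ∑' n : ℕ, b ^ (-β * (n : ℝ)) * Real.cos (2 * Real.pi * (b ^ n * t + Θ n + ψ))

lemma W1_eq_VV (b β : ℝ) (Θ : ℕ → ℝ) (t : ℝ) : W1 b β Θ t = VV b β 0 Θ t := by
  simp [W1, VV]

lemma W2_eq_VV (b β : ℝ) (Θ : ℕ → ℝ) (t : ℝ) : W2 b β Θ t = VV b β (-(1/4)) Θ t := by
  unfold W2 VV
  refine tsum_congr fun n => ?_
  rw [← Real.cos_sub_pi_div_two]
  congr 2
  ring

lemma summable_coef (b β : ℝ) (hb : 1 < b) (hβ : 0 < β) :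
    Summable (fun n : ℕ => b ^ (-β * (n : ℝ))) := by
  simp_rw [Real.rpow_mul_natCast (by linarith : (0:ℝ) ≤ b)]
  exact summable_geometric_of_lt_one (by positivity)
    (Real.rpow_lt_one_of_one_lt_of_neg hb (by linarith))

lemma norm_VV_term_le (b β : ℝ) (hb : 1 < b) (n : ℕ) (x : ℝ) :
    ‖b ^ (-β * (n : ℝ)) * Real.cos x‖ ≤ b ^ (-β * (n : ℝ)) := by
  have h0 : 0 ≤ b ^ (-β * (n : ℝ)) := Real.rpow_nonneg (by linarith) _
  rw [norm_mul, Real.norm_of_nonneg h0]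
  exact mul_le_of_le_one_right h0 (Real.abs_cos_le_one _)

lemma summable_VV (b β ψ : ℝ) (hb : 1 < b) (hβ : 0 < β) (Θ : ℕ → ℝ) (t : ℝ) :
    Summable (fun n : ℕ => b ^ (-β * (n : ℝ)) *
      Real.cos (2 * Real.pi * (b ^ n * t + Θ n + ψ))) :=
  Summable.of_norm_bounded (summable_coef b β hb hβ) fun n => norm_VV_term_le b β hb n _

lemma continuous_VV (b β ψ : ℝ) (hb : 1 < b) (hβ : 0 < β) :
    Continuous (fun q : (ℕ → ℝ) × ℝ => VV b β ψ q.1 q.2) := by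
  unfold VV
  refine continuous_tsum (fun n => ?_) (summable_coef b β hb hβ)
    fun n x => norm_VV_term_le b β hb n _
  fun_prop

lemma continuous_VV_left (b β ψ : ℝ) (hb : 1 < b) (hβ : 0 < β) (t : ℝ) :
    Continuous (fun Θ : ℕ → ℝ => VV b β ψ Θ t) :=
  Continuous.comp (g := fun q : (ℕ → ℝ) × ℝ => VV b β ψ q.1 q.2) (f := fun Θ => (Θ, t))
    (continuous_VV b β ψ hb hβ) (by fun_prop)

lemma continuous_VV_right (b β ψ : ℝ) (hb : 1 < b) (hβ : 0 < β) (Θ : ℕ → ℝ) :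
    Continuous (fun t : ℝ => VV b β ψ Θ t) :=
  Continuous.comp (g := fun q : (ℕ → ℝ) × ℝ => VV b β ψ q.1 q.2) (f := fun t => (Θ, t))
    (continuous_VV b β ψ hb hβ) (by fun_prop)

/-! ### Hölder continuity and the upper bound -/

lemma cos_sub_cos_holder (x y γ : ℝ) (hγ : 0 < γ) (hγ1 : γ ≤ 1) :
    |Real.cos x - Real.cos y| ≤ 2 * |x - y| ^ γ := by
  rcases le_total |x - y| 1 with h | h
  · have h1 := Real.abs_cos_sub_cos_le x y
    have h2 : |x - y| ≤ |x - y| ^ γ := by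
      rcases eq_or_lt_of_le (abs_nonneg (x - y)) with h0 | h0
      · rw [← h0, Real.zero_rpow hγ.ne']
      · simpa using Real.rpow_le_rpow_of_exponent_ge h0 h hγ1
    have := abs_nonneg (x - y)
    linarith
  · have h2 : 1 ≤ |x - y| ^ γ := Real.one_le_rpow h hγ.le
    have h3 : |Real.cos x - Real.cos y| ≤ 2 := by
      rw [abs_le]
      constructor <;> linarith [Real.cos_le_one x, Real.cos_le_one y,
        Real.neg_one_le_cos x, Real.neg_one_le_cos y]
    linarith

lemma VV_holder (b β ψ γ : ℝ) (hb : 1 < b) (hγ : 0 < γ) (hγβ : γ < β) (hβ1 : β < 1) :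
    ∃ C : ℝ, 0 < C ∧ ∀ (Θ : ℕ → ℝ) (s t : ℝ),
      |VV b β ψ Θ s - VV b β ψ Θ t| ≤ C * |s - t| ^ γ := by
  have hb0 : 0 < b := by linarith
  have hS := summable_coef b (β - γ) hb (by linarith)
  set S := ∑' n : ℕ, b ^ (-(β - γ) * (n : ℝ)) with hSdef
  have hSpos : 0 < S := hS.tsum_pos (fun n => (Real.rpow_pos_of_pos hb0 _).le) 0
    (Real.rpow_pos_of_pos hb0 _)
  refine ⟨2 * (2 * Real.pi) ^ γ * S, by positivity, fun Θ s t => ?_⟩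
  unfold VV
  rw [← (summable_VV b β ψ hb (by linarith) Θ s).tsum_sub
    (summable_VV b β ψ hb (by linarith) Θ t)]
  have hterm : ∀ n : ℕ, ‖b ^ (-β * (n : ℝ)) * Real.cos (2 * Real.pi * (b ^ n * s + Θ n + ψ)) -
      b ^ (-β * (n : ℝ)) * Real.cos (2 * Real.pi * (b ^ n * t + Θ n + ψ))‖ ≤
      (2 * (2 * Real.pi) ^ γ * |s - t| ^ γ) * b ^ (-(β - γ) * (n : ℝ)) := by
    intro n
    rw [← mul_sub, norm_mul, Real.norm_of_nonneg (Real.rpow_pos_of_pos hb0 _).le,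
      Real.norm_eq_abs]
    have h1 := cos_sub_cos_holder (2 * Real.pi * (b ^ n * s + Θ n + ψ))
      (2 * Real.pi * (b ^ n * t + Θ n + ψ)) γ hγ (by linarith)
    have h2 : 2 * Real.pi * (b ^ n * s + Θ n + ψ) - 2 * Real.pi * (b ^ n * t + Θ n + ψ) =
      (2 * Real.pi) * b ^ n * (s - t) := by ring
    rw [h2, abs_mul, abs_of_pos (by positivity : 0 < 2 * Real.pi * b ^ n),
      Real.mul_rpow (by positivity) (abs_nonneg _),
      Real.mul_rpow (by positivity) (by positivity)] at h1
    have h3 : b ^ (-(β - γ) * (n : ℝ)) = b ^ (-β * (n : ℝ)) * (b ^ n) ^ γ := by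
      rw [← Real.rpow_natCast, ← Real.rpow_mul hb0.le, ← Real.rpow_add hb0]
      congr 1; ring
    rw [h3]
    calc _ ≤ b ^ (-β * (n : ℝ)) * (2 * ((2 * Real.pi) ^ γ * (b ^ n) ^ γ * |s - t| ^ γ)) := by
          gcongr
      _ = _ := by ring
  have := tsum_of_norm_bounded ((hS.mul_left (2 * (2 * Real.pi) ^ γ * |s - t| ^ γ)).hasSum) hterm
  rw [Real.norm_eq_abs, tsum_mul_left] at this
  calc _ ≤ _ := this
    _ = _ := by rw [← hSdef]; ring

lemma dimH_graph_le (f g : ℝ → ℝ) (γ C : ℝ) (hγ : 0 < γ) (hγ1 : γ < 1) (hC : 0 < C)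
    (hf : ∀ s t, |f s - f t| ≤ C * |s - t| ^ γ) (hg : ∀ s t, |g s - g t| ≤ C * |s - t| ^ γ)
    (A : Set (ℝ × ℝ × ℝ)) (hA : A ⊆ {p | ∃ t ∈ Set.Icc (0 : ℝ) 1, p = (t, f t, g t)}) :
    dimH A ≤ ENNReal.ofReal (3 - 2 * γ) := by
  have hd0 : 0 < 3 - 2 * γ := by linarith
  -- number of boxes
  let K : ℕ → ℕ := fun N => ⌊2 * C * (N : ℝ) ^ (1 - γ)⌋₊ + 1
  let ι : ℕ → Type := fun N => Fin (N + 1) × Fin (K N) × Fin (K N)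
  let T : (N : ℕ) → ι N → Set (ℝ × ℝ × ℝ) := fun N i =>
    Set.Icc ((i.1 : ℝ) / N) (((i.1 : ℝ) + 1) / N) ×ˢ
      (Set.Icc (f ((i.1 : ℝ) / N) - C * (N : ℝ) ^ (-γ) + (i.2.1 : ℝ) / N)
        (f ((i.1 : ℝ) / N) - C * (N : ℝ) ^ (-γ) + ((i.2.1 : ℝ) + 1) / N) ×ˢ
      Set.Icc (g ((i.1 : ℝ) / N) - C * (N : ℝ) ^ (-γ) + (i.2.2 : ℝ) / N)
        (g ((i.1 : ℝ) / N) - C * (N : ℝ) ^ (-γ) + ((i.2.2 : ℝ) + 1) / N))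
  have hIcc : ∀ (a : ℝ) (k : ℝ) (N : ℕ), Metric.ediam (Set.Icc (a + k / N) (a + (k + 1) / N)) ≤
      ENNReal.ofReal (1 / (N : ℝ)) := by
    intro a k N
    rw [Real.ediam_Icc]
    apply le_of_eq
    congr 1; ring
  have hIcc' : ∀ (k : ℝ) (N : ℕ), Metric.ediam (Set.Icc (k / N) ((k + 1) / N)) ≤
      ENNReal.ofReal (1 / (N : ℝ)) := by
    intro k N
    have := hIcc 0 k N
    rwa [zero_add, zero_add] at this
  have hdiam : ∀ N (i : ι N), Metric.ediam (T N i) ≤ ENNReal.ofReal (1 / (N : ℝ)) := by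
    intro N i
    refine Metric.ediam_le fun p hp q hq => ?_
    obtain ⟨h1, h2, h3⟩ := hp
    obtain ⟨h1', h2', h3'⟩ := hq
    have e1 := (Metric.edist_le_ediam_of_mem h1 h1').trans (hIcc' (i.1 : ℝ) N)
    have e2 := (Metric.edist_le_ediam_of_mem h2 h2').trans (hIcc _ _ N)
    have e3 := (Metric.edist_le_ediam_of_mem h3 h3').trans (hIcc _ _ N)
    rw [Prod.edist_eq, Prod.edist_eq]
    exact max_le e1 (max_le e2 e3)
  have hcov : ∀ᶠ N : ℕ in Filter.atTop, A ⊆ ⋃ i, T N i := by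
    filter_upwards [Filter.eventually_ge_atTop 1] with N hN
    have hN0 : (0 : ℝ) < N := by exact_mod_cast hN
    have key : ∀ (φ : ℝ → ℝ), (∀ s t, |φ s - φ t| ≤ C * |s - t| ^ γ) → ∀ t : ℝ, ∀ i : ℝ,
        i / N ≤ t → t ≤ (i + 1) / N → ∃ p : Fin (K N),
        φ t ∈ Set.Icc (φ (i / N) - C * (N : ℝ) ^ (-γ) + (p : ℝ) / N)
        (φ (i / N) - C * (N : ℝ) ^ (-γ) + ((p : ℝ) + 1) / N) := by
      intro φ hφ t i h1 h2
      have h3 : |t - i / N| ^ γ ≤ (N : ℝ) ^ (-γ) := by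
        rw [Real.rpow_neg hN0.le, ← Real.inv_rpow hN0.le]
        apply Real.rpow_le_rpow (abs_nonneg _) _ hγ.le
        rw [abs_of_nonneg (by linarith)]
        rw [add_div] at h2
        rw [← one_div]; linarith
      have h4 := (hφ t (i / N)).trans (mul_le_mul_of_nonneg_left h3 hC.le)
      rw [abs_le] at h4
      set z := (φ t - φ (i / N) + C * (N : ℝ) ^ (-γ)) * N with hz
      have hz0 : 0 ≤ z := mul_nonneg (by linarith) hN0.le
      have hz1 : z ≤ 2 * C * (N : ℝ) ^ (1 - γ) := by
        have : (N : ℝ) ^ (1 - γ) = (N : ℝ) ^ (-γ) * N := by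
          rw [sub_eq_neg_add, Real.rpow_add_one hN0.ne']
        rw [this, hz]
        nlinarith
      refine ⟨⟨⌊z⌋₊, Nat.lt_succ_of_le (Nat.floor_le_floor hz1)⟩, ?_⟩
      have hz2 : φ t = φ (i / N) - C * (N : ℝ) ^ (-γ) + z / N := by
        rw [hz]; field_simp; ring
      have h5 := Nat.floor_le hz0
      have h6 := (Nat.lt_floor_add_one z).le
      simp only [Set.mem_Icc]
      have h7 : (⌊z⌋₊ : ℝ) / N ≤ z / N := by gcongr
      have h8 : z / N ≤ ((⌊z⌋₊ : ℝ) + 1) / N := by gcongr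
      constructor <;> linarith
    intro p hp
    obtain ⟨t, ⟨ht0, ht1⟩, rfl⟩ := hA hp
    have hi : ⌊t * N⌋₊ < N + 1 := by
      apply Nat.lt_succ_of_le
      apply Nat.floor_le_of_le
      nlinarith
    have h1 : ((⌊t * N⌋₊ : ℕ) : ℝ) / N ≤ t := by
      rw [div_le_iff₀ hN0]; exact Nat.floor_le (by positivity)
    have h2 : t ≤ (((⌊t * N⌋₊ : ℕ) : ℝ) + 1) / N := by
      rw [le_div_iff₀ hN0]; exact (Nat.lt_floor_add_one _).le
    obtain ⟨p1, hp1⟩ := key f hf t _ h1 h2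
    obtain ⟨p2, hp2⟩ := key g hg t _ h1 h2
    refine Set.mem_iUnion.2 ⟨(⟨⌊t * N⌋₊, hi⟩, p1, p2), ⟨h1, h2⟩, hp1, hp2⟩
  have hr : Filter.Tendsto (fun N : ℕ => ENNReal.ofReal (1 / (N : ℝ))) Filter.atTop (nhds 0) := by
    have := ENNReal.tendsto_ofReal (tendsto_one_div_atTop_nhds_zero_nat (𝕜 := ℝ))
    simpa using this
  have hmain := Measure.hausdorffMeasure_le_liminf_sum (3 - 2 * γ) A _ hr T
    (Filter.Eventually.of_forall hdiam) hcov
  have hbound : ∀ᶠ N : ℕ in Filter.atTop, ∑ i, Metric.ediam (T N i) ^ (3 - 2 * γ) ≤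
      ENNReal.ofReal (2 * (2 * C + 1) ^ 2) := by
    filter_upwards [Filter.eventually_ge_atTop 1] with N hN
    have hN0 : (0 : ℝ) < N := by exact_mod_cast hN
    have hN1 : (1 : ℝ) ≤ N := by exact_mod_cast hN
    calc ∑ i, Metric.ediam (T N i) ^ (3 - 2 * γ)
        ≤ ∑ i : ι N, ENNReal.ofReal ((1 / (N : ℝ)) ^ (3 - 2 * γ)) := by
          apply Finset.sum_le_sum
          intro i _
          rw [← ENNReal.ofReal_rpow_of_pos (by positivity)]
          exact ENNReal.rpow_le_rpow (hdiam N i) hd0.le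
      _ = ENNReal.ofReal (((N + 1) * (K N * K N) : ℕ) * (1 / (N : ℝ)) ^ (3 - 2 * γ)) := by
          rw [Finset.sum_const, nsmul_eq_mul, ENNReal.ofReal_mul (by positivity),
            ENNReal.ofReal_natCast]
          congr 2
          simp [ι]
      _ ≤ _ := by
          apply ENNReal.ofReal_le_ofReal
          have hK : (K N : ℝ) ≤ (2 * C + 1) * (N : ℝ) ^ (1 - γ) := by
            have h1 : (⌊2 * C * (N : ℝ) ^ (1 - γ)⌋₊ : ℝ) ≤ 2 * C * (N : ℝ) ^ (1 - γ) :=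
              Nat.floor_le (by positivity)
            have h2 : 1 ≤ (N : ℝ) ^ (1 - γ) := Real.one_le_rpow hN1 (by linarith)
            simp only [K]
            push_cast
            linarith
          have e : (1 / (N : ℝ)) ^ (3 - 2 * γ) * (N * ((N : ℝ) ^ (1 - γ)) ^ 2) = 1 := by
            rw [one_div, Real.inv_rpow hN0.le, ← Real.rpow_neg hN0.le, ← Real.rpow_natCast,
              ← Real.rpow_mul hN0.le]
            nth_rewrite 2 [← Real.rpow_one (N : ℝ)]
            rw [← Real.rpow_add hN0, ← Real.rpow_add hN0]
            have : -(3 - 2 * γ) + (1 + (1 - γ) * ((2 : ℕ) : ℝ)) = 0 := by push_cast; ring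
            rw [this, Real.rpow_zero]
          push_cast
          calc ((N : ℝ) + 1) * (K N * K N) * (1 / (N : ℝ)) ^ (3 - 2 * γ)
              ≤ (2 * N) * (((2 * C + 1) * (N : ℝ) ^ (1 - γ)) * ((2 * C + 1) * (N : ℝ) ^ (1 - γ)))
                * (1 / (N : ℝ)) ^ (3 - 2 * γ) := by
                gcongr; linarith
            _ = 2 * (2 * C + 1) ^ 2 *
              ((1 / (N : ℝ)) ^ (3 - 2 * γ) * (N * ((N : ℝ) ^ (1 - γ)) ^ 2)) := by ring
            _ = _ := by rw [e, mul_one]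
  have hfin : μH[3 - 2 * γ] A ≠ ⊤ := by
    have h1 := hmain.trans (Filter.liminf_le_of_frequently_le' hbound.frequently)
    exact ne_top_of_le_ne_top ENNReal.ofReal_ne_top h1
  have := dimH_le_of_hausdorffMeasure_ne_top (s := A) (d := (3 - 2 * γ).toNNReal)
    (by rwa [Real.coe_toNNReal _ hd0.le])
  exact this

lemma Wgraph_dimH_le (b β : ℝ) (hb : 1 < b) (hβ : β ∈ Set.Ioo (0 : ℝ) (1 / 2)) (Θ Λ : ℕ → ℝ) :
    dimH (Wgraph b β Θ Λ) ≤ ENNReal.ofReal (3 - 2 * β) := by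
  obtain ⟨h0, h1⟩ := hβ
  have hev : ∀ᶠ γ in nhdsWithin β (Set.Iio β),
      dimH (Wgraph b β Θ Λ) ≤ ENNReal.ofReal (3 - 2 * γ) := by
    filter_upwards [Ioo_mem_nhdsLT h0] with γ hγ
    obtain ⟨C1, hC1, H1⟩ := VV_holder b β 0 γ hb hγ.1 hγ.2 (by linarith)
    obtain ⟨C2, hC2, H2⟩ := VV_holder b β (-(1/4)) γ hb hγ.1 hγ.2 (by linarith)
    refine dimH_graph_le (VV b β 0 Θ) (VV b β (-(1/4)) Λ) γ (C1 + C2) hγ.1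
      (by linarith [hγ.2]) (by positivity) ?_ ?_ _ ?_
    · intro s t
      refine (H1 Θ s t).trans ?_
      gcongr; linarith
    · intro s t
      refine (H2 Λ s t).trans ?_
      gcongr; linarith
    · rintro p ⟨t, ht, rfl⟩
      exact ⟨t, ht, by rw [W1_eq_VV, W2_eq_VV]⟩
  have hlim : Filter.Tendsto (fun γ : ℝ => ENNReal.ofReal (3 - 2 * γ))
      (nhdsWithin β (Set.Iio β)) (nhds (ENNReal.ofReal (3 - 2 * β))) := by
    apply ENNReal.tendsto_ofReal
    exact (Continuous.tendsto (by fun_prop) β).mono_left nhdsWithin_le_nhds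
  exact ge_of_tendsto hlim hev

/-! ### One-variable trigonometric estimates -/

lemma two_mul_abs_le_abs_sin_pi (w : ℝ) (hw : |w| ≤ 1 / 2) : 2 * |w| ≤ |Real.sin (Real.pi * w)| := by
  have h := Real.mul_le_sin (x := Real.pi * |w|) (by positivity)
    (by nlinarith [Real.pi_pos])
  have e : 2 / Real.pi * (Real.pi * |w|) = 2 * |w| := by field_simp
  rw [e] at h
  refine h.trans ?_
  rcases abs_cases w with ⟨h1, _⟩ | ⟨h1, _⟩ <;> rw [h1]
  · exact le_abs_self _
  · rw [mul_neg, Real.sin_neg]; exact neg_le_abs _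

lemma vol_of_three_pieces (E : Set ℝ) (m c d : ℝ) (hE : E ⊆ Set.Icc 0 1)
    (h : ∀ u ∈ E, ∀ v ∈ E, ⌊2 * (u + m) + c⌋ = ⌊2 * (v + m) + c⌋ → |u - v| ≤ d) :
    volume E ≤ ENNReal.ofReal (3 * d) := by
  by_cases hd : d < 0
  · have : E = ∅ := by
      ext u
      simp only [Set.mem_empty_iff_false, iff_false]
      intro hu
      have := h u hu u hu rfl
      simp at this; linarith
    simp [this]
  push Not at hd
  set N := ⌊2 * m + c⌋ with hN
  have hsub : E ⊆ ⋃ i ∈ Finset.Icc N (N + 2), {u | u ∈ E ∧ ⌊2 * (u + m) + c⌋ = i} := by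
    intro u hu
    simp only [Set.mem_iUnion]
    refine ⟨⌊2 * (u + m) + c⌋, ?_, hu, rfl⟩
    rw [Finset.mem_Icc]
    have := hE hu
    constructor
    · apply Int.floor_le_floor; linarith [this.1]
    · have : ⌊2 * (u + m) + c⌋ ≤ ⌊2 * m + c + (2 : ℤ)⌋ := by
        apply Int.floor_le_floor; push_cast; linarith [this.2]
      rwa [Int.floor_add_intCast] at this
  calc volume E ≤ ∑ i ∈ Finset.Icc N (N + 2), volume {u | u ∈ E ∧ ⌊2 * (u + m) + c⌋ = i} :=
        (measure_mono hsub).trans (measure_biUnion_finset_le _ _)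
    _ ≤ ∑ i ∈ Finset.Icc N (N + 2), ENNReal.ofReal d := by
        apply Finset.sum_le_sum
        intro i _
        refine (Real.volume_le_diam _).trans (Metric.ediam_le ?_)
        rintro u ⟨hu, hu'⟩ v ⟨hv, hv'⟩
        rw [edist_dist, Real.dist_eq]
        exact ENNReal.ofReal_le_ofReal (h u hu v hv (hu'.trans hv'.symm))
    _ = _ := by
        rw [Finset.sum_const, Int.card_Icc, nsmul_eq_mul]
        rw [ENNReal.ofReal_mul (by norm_num)]
        congr 1
        have : (N + 2 + 1 - N).toNat = 3 := by omega
        rw [this]; simp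

lemma vol_bad (m δ : ℝ) :
    volume ({u | |Real.cos (2 * Real.pi * (u + m))| < δ} ∩ Set.Icc 0 1) ≤
      ENNReal.ofReal (3 * δ) := by
  refine vol_of_three_pieces _ m 0 δ Set.inter_subset_right ?_
  have key : ∀ u : ℝ, |Real.cos (2 * Real.pi * (u + m))| < δ →
      2 * |2 * (u + m) - ⌊2 * (u + m)⌋ - 1 / 2| ≤ δ := by
    intro u hu
    set n := ⌊2 * (u + m)⌋
    set w := 2 * (u + m) - n - 1 / 2 with hw
    have h1 : |w| ≤ 1 / 2 := by
      rw [abs_le]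
      have := Int.floor_le (2 * (u + m))
      have := Int.lt_floor_add_one (2 * (u + m))
      constructor <;> linarith
    have h2 := two_mul_abs_le_abs_sin_pi w h1
    have h3 : |Real.cos (2 * Real.pi * (u + m))| = |Real.sin (Real.pi * w)| := by
      have : 2 * Real.pi * (u + m) = Real.pi * w + Real.pi / 2 + n * Real.pi := by
        rw [hw]; ring
      rw [this, Real.cos_add_int_mul_pi, abs_mul, Real.cos_add_pi_div_two, abs_neg]
      simp
    linarith
  rintro u ⟨hu, _⟩ v ⟨hv, _⟩ huv
  have h1 := key u hu
  have h2 := key v hv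
  simp only [add_zero] at huv
  rw [huv] at h1
  have e : 2 * (u - v) = (2 * (u + m) - ⌊2 * (v + m)⌋ - 1 / 2) - (2 * (v + m) - ⌊2 * (v + m)⌋ - 1 / 2) := by
    ring
  have h3 : |2 * (u - v)| ≤ δ / 2 + δ / 2 := by
    rw [e]
    refine (abs_sub _ _).trans ?_
    linarith
  rw [abs_mul, abs_two] at h3
  have := abs_nonneg (u - v)
  linarith

lemma vol_good (m δ a c r : ℝ) (hδ : 0 < δ) (ha : a ≠ 0) :
    volume ({u | |c + a * Real.sin (2 * Real.pi * (u + m))| ≤ r ∧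
      δ ≤ |Real.cos (2 * Real.pi * (u + m))|} ∩ Set.Icc 0 1) ≤
      ENNReal.ofReal (3 * (r / (|a| * δ))) := by
  refine vol_of_three_pieces _ m (1/2) _ Set.inter_subset_right ?_
  rintro u ⟨⟨hu, hu'⟩, _⟩ v ⟨⟨hv, hv'⟩, _⟩ huv
  set n := ⌊2 * (v + m) + 1 / 2⌋ with hn
  have hapos : 0 < |a| := abs_pos.2 ha
  -- shift
  set x := Real.pi * (2 * (u + m) - n) with hx
  set y := Real.pi * (2 * (v + m) - n) with hy
  have hxr : |x| ≤ Real.pi / 2 := by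
    rw [hx, abs_mul, abs_of_pos Real.pi_pos]
    have h1 := Int.floor_le (2 * (u + m) + 1 / 2)
    have h2 := Int.lt_floor_add_one (2 * (u + m) + 1 / 2)
    rw [huv] at h1 h2
    have : |2 * (u + m) - n| ≤ 1 / 2 := by
      rw [abs_le]; constructor <;> linarith
    nlinarith [Real.pi_pos]
  have hyr : |y| ≤ Real.pi / 2 := by
    rw [hy, abs_mul, abs_of_pos Real.pi_pos]
    have h1 := Int.floor_le (2 * (v + m) + 1 / 2)
    have h2 := Int.lt_floor_add_one (2 * (v + m) + 1 / 2)
    have : |2 * (v + m) - n| ≤ 1 / 2 := by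
      rw [abs_le]; constructor <;> linarith
    nlinarith [Real.pi_pos]
  have ex : 2 * Real.pi * (u + m) = x + n * Real.pi := by rw [hx]; ring
  have ey : 2 * Real.pi * (v + m) = y + n * Real.pi := by rw [hy]; ring
  rw [ex, Real.cos_add_int_mul_pi, abs_mul] at hu'
  rw [ey, Real.cos_add_int_mul_pi, abs_mul] at hv'
  have hs : |(-1 : ℝ) ^ n| = 1 := by simp
  rw [hs, one_mul] at hu' hv'
  rw [abs_le] at hxr hyr
  rw [abs_of_nonneg (Real.cos_nonneg_of_mem_Icc ⟨by linarith, by linarith⟩)] at hu' hv'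
  rw [ex, Real.sin_add_int_mul_pi] at hu
  rw [ey, Real.sin_add_int_mul_pi] at hv
  -- upper bound on the difference of sines
  have hup : |a| * |Real.sin x - Real.sin y| ≤ 2 * r := by
    have e : (c + a * ((-1 : ℝ) ^ n * Real.sin x)) - (c + a * ((-1 : ℝ) ^ n * Real.sin y)) =
      a * (-1 : ℝ) ^ n * (Real.sin x - Real.sin y) := by ring
    have h1 := (abs_sub (c + a * ((-1 : ℝ) ^ n * Real.sin x)) (c + a * ((-1 : ℝ) ^ n * Real.sin y)))
    rw [e, abs_mul, abs_mul, hs, mul_one] at h1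
    linarith
  -- lower bound
  have hmid : δ ≤ Real.cos ((x + y) / 2) := by
    have h1 := Real.cos_add_cos x y
    have h2 := Real.cos_le_one ((x - y) / 2)
    have h3 : 0 ≤ Real.cos ((x + y) / 2) :=
      Real.cos_nonneg_of_mem_Icc ⟨by linarith, by linarith⟩
    nlinarith
  have hlow : 2 * |u - v| * (2 * δ) ≤ |Real.sin x - Real.sin y| := by
    have e : (x - y) / 2 = Real.pi * (u - v) := by rw [hx, hy]; ring
    have hw : |u - v| ≤ 1 / 2 := by
      have : |(x - y) / 2| ≤ Real.pi / 2 := by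
        rw [abs_le]; constructor <;> linarith
      rw [e, abs_mul, abs_of_pos Real.pi_pos] at this
      have := Real.pi_pos
      by_contra hcon
      push Not at hcon
      nlinarith
    have h2 := two_mul_abs_le_abs_sin_pi (u - v) hw
    rw [Real.sin_sub_sin, e, abs_mul, abs_mul, abs_two, abs_of_nonneg (hδ.le.trans hmid)]
    have := abs_nonneg (u - v)
    nlinarith [mul_le_mul h2 hmid hδ.le (abs_nonneg _)]
  rw [le_div_iff₀ (by positivity)]
  have h0 := mul_le_mul_of_nonneg_left hlow hapos.le
  have : 0 ≤ |u - v| * (|a| * δ) := by positivity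
  nlinarith

/-! ### The product measure -/

/-- Uniform measure on the unit interval. -/
noncomputable def unif : Measure ℝ := volume.restrict (Set.Icc (0 : ℝ) 1)

instance : IsProbabilityMeasure unif := ⟨by simp [unif]⟩

lemma unif_prod_eq {μ : Measure (ℕ → ℝ)} (hμ : IsUniformProductMeasure μ) :
    μ = Measure.infinitePi (fun _ : ℕ => unif) := by
  apply Measure.eq_infinitePi
  intro s t ht
  exact hμ s t ht

lemma unif_prod_prob {μ : Measure (ℕ → ℝ)} (hμ : IsUniformProductMeasure μ) :
    IsProbabilityMeasure μ := ⟨by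
  have := hμ ∅ (fun _ => Set.univ) (fun _ => MeasurableSet.univ)
  simpa using this⟩

lemma unif_prod_update {μ : Measure (ℕ → ℝ)} (hμ : IsUniformProductMeasure μ) (i : ℕ) :
    (μ.prod unif).map (fun p : (ℕ → ℝ) × ℝ => Function.update p.1 i p.2) = μ := by
  have := unif_prod_prob hμ
  have hm : Measurable (fun p : (ℕ → ℝ) × ℝ => Function.update p.1 i p.2) := measurable_update'
  conv_rhs => rw [unif_prod_eq hμ]
  apply Measure.eq_infinitePi
  intro s t ht
  rw [Measure.map_apply hm (MeasurableSet.pi s.countable_toSet (fun j _ => ht j))]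
  have hpre : (fun p : (ℕ → ℝ) × ℝ => Function.update p.1 i p.2) ⁻¹' ((s : Set ℕ).pi t) =
      {f : ℕ → ℝ | ∀ j ∈ s.erase i, f j ∈ t j} ×ˢ {u | i ∈ s → u ∈ t i} := by
    ext ⟨f, u⟩
    simp only [Set.mem_preimage, Set.mem_pi, Set.mem_prod, Set.mem_ofPred_eq, Finset.mem_erase,
      Finset.mem_coe]
    constructor
    · intro h
      refine ⟨fun j hj => ?_, fun hi => ?_⟩
      · simpa [Function.update_of_ne hj.1] using h j hj.2
      · simpa using h i hi
    · rintro ⟨h1, h2⟩ j hj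
      by_cases hji : j = i
      · subst hji; simpa using h2 hj
      · simpa [Function.update_of_ne hji] using h1 j ⟨hji, hj⟩
  rw [hpre, Measure.prod_prod, hμ _ _ ht]
  by_cases hi : i ∈ s
  · simp only [hi, true_imp_iff, Set.ofPred_mem_eq]
    exact Finset.prod_erase_mul s (fun j => unif (t j)) hi
  · simp only [hi, false_imp_iff, Set.ofPred_true, measure_univ, mul_one]
    rw [Finset.erase_eq_of_notMem hi]
    rfl

lemma unif_prod_coord {μ : Measure (ℕ → ℝ)} (hμ : IsUniformProductMeasure μ) (i : ℕ)
    (E : Set (ℕ → ℝ)) (hE : MeasurableSet E) (c : ENNReal)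
    (h : ∀ f, unif {u | Function.update f i u ∈ E} ≤ c) : μ E ≤ c := by
  have := unif_prod_prob hμ
  have hm : Measurable (fun p : (ℕ → ℝ) × ℝ => Function.update p.1 i p.2) := measurable_update'
  rw [← unif_prod_update hμ i, Measure.map_apply hm hE, Measure.prod_apply (hm hE)]
  calc _ ≤ ∫⁻ f, c ∂μ := lintegral_mono fun f => h f
    _ = c := by simp

lemma small_ball_abstract {μ : Measure (ℕ → ℝ)} (hμ : IsUniformProductMeasure μ)
    (X : (ℕ → ℝ) → ℝ) (hX : Measurable X) (S : Finset ℕ) (a m : ℕ → ℝ) (c : ℕ → (ℕ → ℝ) → ℝ)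
    (hc : ∀ i ∈ S, ∀ f u, X (Function.update f i u) =
      c i f + a i * Real.sin (2 * Real.pi * (u + m i)))
    (A δ r : ℝ) (hA : 0 < A) (haA : ∀ i ∈ S, A ≤ |a i|) (hδ : 0 < δ) (hr : 0 ≤ r) :
    μ {f | |X f| ≤ r} ≤ S.card * ENNReal.ofReal (3 * (r / (A * δ))) +
      ENNReal.ofReal (3 * δ) ^ S.card := by
  have hsub : {f | |X f| ≤ r} ⊆
      (⋃ i ∈ S, {f | |X f| ≤ r ∧ δ ≤ |Real.cos (2 * Real.pi * (f i + m i))|}) ∪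
      {f | ∀ i ∈ S, f i ∈ {u | |Real.cos (2 * Real.pi * (u + m i))| < δ}} := by
    intro f hf
    by_cases h : ∀ i ∈ S, f i ∈ {u | |Real.cos (2 * Real.pi * (u + m i))| < δ}
    · exact Or.inr h
    · left
      push Not at h
      obtain ⟨i, hi, h'⟩ := h
      simp only [Set.mem_iUnion]
      exact ⟨i, hi, hf, not_lt.1 h'⟩
  refine (measure_mono hsub).trans ((measure_union_le _ _).trans (add_le_add ?_ ?_))
  · refine (measure_biUnion_finset_le _ _).trans ?_
    rw [← nsmul_eq_mul]
    apply Finset.sum_le_card_nsmul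
    intro i hi
    apply unif_prod_coord hμ i
    · have m1 : MeasurableSet {f : ℕ → ℝ | |X f| ≤ r} := measurableSet_le hX.abs measurable_const
      have m2 : MeasurableSet {f : ℕ → ℝ | δ ≤ |Real.cos (2 * Real.pi * (f i + m i))|} :=
        measurableSet_le measurable_const (by fun_prop)
      exact m1.inter m2
    · intro f
      simp only [Set.mem_ofPred_eq, hc i hi, Function.update_self]
      have hai : a i ≠ 0 := by
        have := haA i hi
        intro h
        rw [h, abs_zero] at this; linarith
      rw [unif, Measure.restrict_apply' measurableSet_Icc]
      refine (vol_good (m i) δ (a i) (c i f) r hδ hai).trans ?_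
      apply ENNReal.ofReal_le_ofReal
      have := haA i hi
      gcongr
  · rw [hμ]
    · apply Finset.prod_le_pow_card
      intro i _
      rw [Measure.restrict_apply' measurableSet_Icc]
      exact vol_bad (m i) δ
    · intro i
      apply measurableSet_lt _ measurable_const
      fun_prop

lemma small_ball_abstract' {μ : Measure (ℕ → ℝ)} (hμ : IsUniformProductMeasure μ)
    (X : (ℕ → ℝ) → ℝ) (hX : Measurable X) (S : Finset ℕ) (a m : ℕ → ℝ) (c : ℕ → (ℕ → ℝ) → ℝ)
    (hc : ∀ i ∈ S, ∀ f u, X (Function.update f i u) =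
      c i f + a i * Real.sin (2 * Real.pi * (u + m i)))
    (A r : ℝ) (hA : 0 < A) (haA : ∀ i ∈ S, A ≤ |a i|) (hr : 0 < r) :
    μ {f | |X f| ≤ r} ≤ ENNReal.ofReal
      ((3 * S.card + 3 ^ S.card) * (r / A) ^ ((S.card : ℝ) / (S.card + 1))) := by
  set k := S.card with hk
  have hρ : 0 < r / A := by positivity
  have h := small_ball_abstract hμ X hX S a m c hc A ((r / A) ^ (1 / ((k : ℝ) + 1))) r hA haA
    (by positivity) hr.le
  refine h.trans (le_of_eq ?_)
  rw [← hk, ← ENNReal.ofReal_natCast k, ← ENNReal.ofReal_mul (by positivity),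
    ← ENNReal.ofReal_pow (by positivity), ← ENNReal.ofReal_add (by positivity) (by positivity)]
  congr 1
  have hk1 : (k : ℝ) + 1 ≠ 0 := by positivity
  have e1 : r / (A * (r / A) ^ (1 / ((k : ℝ) + 1))) = (r / A) ^ ((k : ℝ) / (k + 1)) := by
    have : (k : ℝ) / (k + 1) = 1 - 1 / ((k : ℝ) + 1) := by field_simp; ring
    rw [this, Real.rpow_sub hρ, Real.rpow_one, div_div]
  have e2 : ((r / A) ^ (1 / ((k : ℝ) + 1))) ^ k = (r / A) ^ ((k : ℝ) / (k + 1)) := by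
    rw [← Real.rpow_natCast, ← Real.rpow_mul hρ.le]
    congr 1; field_simp
  rw [e1, mul_pow, e2]
  ring

/-- The increment of the series with the `i`-th term removed. -/
noncomputable def restV (b β ψ x y : ℝ) (i : ℕ) (f : ℕ → ℝ) : ℝ :=
  ∑' n : ℕ, if n = i then 0 else
        (b ^ (-β * (n : ℝ)) * Real.cos (2 * Real.pi * (b ^ n * x + f n + ψ)) -
          b ^ (-β * (n : ℝ)) * Real.cos (2 * Real.pi * (b ^ n * y + f n + ψ)))

lemma VV_small_ball (b β ψ : ℝ) (hb : 1 < b) (hβ : 0 < β) (k : ℕ)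
    {μ : Measure (ℕ → ℝ)} (hμ : IsUniformProductMeasure μ) :
    ∃ D : ℝ, 0 < D ∧ ∀ x y : ℝ, x ≠ y → |x - y| ≤ 1 / (2 * b ^ k) → ∀ r : ℝ, 0 < r →
      μ {Θ | |VV b β ψ Θ x - VV b β ψ Θ y| ≤ r} ≤
        ENNReal.ofReal (D * (r / |x - y| ^ β) ^ ((k : ℝ) / (k + 1))) := by
  have hb0 : 0 < b := by linarith
  refine ⟨(3 * k + 3 ^ k) * (1 / (2 / b ^ (k + 1))) ^ ((k : ℝ) / (k + 1)), by positivity, ?_⟩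
  intro x y hxy hle r hr
  set h := |x - y| with hh
  have hpos : 0 < h := abs_pos.2 (sub_ne_zero.2 hxy)
  have hbk : 0 < b ^ k := by positivity
  have hbk1 : 1 ≤ b ^ k := one_le_pow₀ hb.le
  have hkx : b ^ k ≤ 1 / (2 * h) := by
    rw [le_div_iff₀ (by positivity)]
    rw [le_div_iff₀ (by positivity)] at hle
    linarith
  obtain ⟨N, hN1, hN2⟩ := exists_nat_pow_near (hbk1.trans hkx) hb
  have hkN : k ≤ N := by
    have := (pow_lt_pow_iff_right₀ hb).1 (hkx.trans_lt hN2)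
    omega
  rw [le_div_iff₀ (by positivity)] at hN1
  rw [div_lt_iff₀ (by positivity)] at hN2
  have hcard : (Finset.Ioc (N - k) N).card = k := by
    rw [Nat.card_Ioc]; omega
  have hsplit : ∀ i : ℕ, ∀ (f : ℕ → ℝ) (u : ℝ),
      VV b β ψ (Function.update f i u) x - VV b β ψ (Function.update f i u) y =
      restV b β ψ x y i f +
      (-2 * b ^ (-β * (i : ℝ)) * Real.sin (Real.pi * (b ^ i * (x - y)))) *
        Real.sin (2 * Real.pi * (u + (b ^ i * (x + y) / 2 + ψ))) := by
    intro i f u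
    unfold VV restV
    rw [← (summable_VV b β ψ hb hβ _ x).tsum_sub (summable_VV b β ψ hb hβ _ y)]
    rw [((summable_VV b β ψ hb hβ _ x).sub (summable_VV b β ψ hb hβ _ y)).tsum_eq_add_tsum_ite i]
    rw [add_comm]
    congr 1
    · refine tsum_congr fun n => ?_
      by_cases hn : n = i
      · simp [hn]
      · simp [hn]
    · rw [Function.update_self, ← mul_sub, Real.cos_sub_cos]
      have e1 : (2 * Real.pi * (b ^ i * x + u + ψ) + 2 * Real.pi * (b ^ i * y + u + ψ)) / 2 =
        2 * Real.pi * (u + (b ^ i * (x + y) / 2 + ψ)) := by ring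
      have e2 : (2 * Real.pi * (b ^ i * x + u + ψ) - 2 * Real.pi * (b ^ i * y + u + ψ)) / 2 =
        Real.pi * (b ^ i * (x - y)) := by ring
      rw [e1, e2]; ring
  have hX : Measurable (fun Θ : ℕ → ℝ => VV b β ψ Θ x - VV b β ψ Θ y) := by
    exact ((continuous_VV_left b β ψ hb hβ x).sub
      (continuous_VV_left b β ψ hb hβ y)).measurable
  have main := small_ball_abstract' hμ _ hX (Finset.Ioc (N - k) N)
    (fun i => -2 * b ^ (-β * (i : ℝ)) * Real.sin (Real.pi * (b ^ i * (x - y))))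
    (fun i => b ^ i * (x + y) / 2 + ψ) (restV b β ψ x y) (fun i _ => hsplit i) (2 / b ^ (k + 1) * h ^ β) r
    (by positivity) ?_ hr
  · rw [hcard] at main
    refine main.trans (le_of_eq ?_)
    congr 1
    rw [mul_assoc, ← Real.mul_rpow (by positivity) (by positivity)]
    congr 2
    field_simp
  · intro i hi
    rw [Finset.mem_Ioc] at hi
    have hbi : 0 < b ^ i := by positivity
    have hiN : b ^ i ≤ b ^ N := pow_le_pow_right₀ hb.le hi.2
    have hih : |b ^ i * (x - y)| = b ^ i * h := by rw [abs_mul, abs_of_pos hbi]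
    have h1 := two_mul_abs_le_abs_sin_pi (b ^ i * (x - y)) (by
      rw [hih]; nlinarith)
    rw [hih] at h1
    have h2 : h ^ β ≤ b ^ (-β * (i : ℝ)) := by
      have e : b ^ (-β * (i : ℝ)) = ((b ^ i)⁻¹) ^ β := by
        rw [← Real.rpow_natCast, ← Real.rpow_neg hb0.le, ← Real.rpow_mul hb0.le]
        congr 1; ring
      rw [e]
      apply Real.rpow_le_rpow hpos.le _ hβ.le
      rw [← one_div, le_div_iff₀ hbi]
      nlinarith
    have h3 : 1 / b ^ (k + 1) ≤ 2 * (b ^ i * h) := by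
      rw [div_le_iff₀ (by positivity)]
      have : b ^ (N + 1) ≤ b ^ (i + (k + 1)) := pow_le_pow_right₀ hb.le (by omega)
      rw [pow_add b i (k + 1)] at this
      nlinarith
    have h4 : (0:ℝ) ≤ b ^ (-β * (i : ℝ)) := Real.rpow_nonneg hb0.le _
    rw [abs_mul, abs_mul, abs_of_nonneg h4]
    have : |(-2 : ℝ)| = 2 := by norm_num
    rw [this]
    calc 2 / b ^ (k + 1) * h ^ β = 2 * h ^ β * (1 / b ^ (k + 1)) := by ring
      _ ≤ 2 * b ^ (-β * (i : ℝ)) * |Real.sin (Real.pi * (b ^ i * (x - y)))| := by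
        gcongr
        exact h3.trans h1

/-! ### The lower bound: mass distribution and expected energy -/

lemma lintegral_abs_rpow_le (x r q : ℝ) (hr : 0 < r) (hq1 : q < 1) :
    ∫⁻ y, (if |x - y| ≤ r then ENNReal.ofReal (|x - y| ^ (-q)) else 0) ≤
      ENNReal.ofReal (2 * (r ^ (1 - q) / (1 - q))) := by
  have h1 := lintegral_sub_left_eq_self (μ := volume)
    (fun z : ℝ => if |z| ≤ r then ENNReal.ofReal (|z| ^ (-q)) else 0) x
  rw [h1]
  let g : ℝ → ENNReal := (Set.Icc 0 r).indicator fun z => ENNReal.ofReal (z ^ (-q))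
  have hgm : Measurable g := by
    apply Measurable.indicator _ measurableSet_Icc
    fun_prop
  have hg : ∫⁻ z, g z = ENNReal.ofReal (r ^ (1 - q) / (1 - q)) := by
    rw [lintegral_indicator measurableSet_Icc, setLIntegral_congr Ioc_ae_eq_Icc.symm]
    have hintg := intervalIntegral.intervalIntegrable_rpow' (a := 0) (b := r) (r := -q) (by linarith)
    rw [intervalIntegrable_iff_integrableOn_Ioc_of_le hr.le] at hintg
    rw [← ofReal_integral_eq_lintegral_ofReal hintg]
    · rw [← intervalIntegral.integral_of_le hr.le, integral_rpow (Or.inl (by linarith))]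
      congr 1
      rw [Real.zero_rpow (by linarith), sub_zero]
      congr 1
      · congr 1; ring
      · ring
    · filter_upwards [ae_restrict_mem measurableSet_Ioc] with z hz
      exact Real.rpow_nonneg hz.1.le _
  calc _ ≤ ∫⁻ z, (g z + g (-z)) := by
        apply lintegral_mono
        intro z
        dsimp only
        split_ifs with h
        · rcases le_total 0 z with hz | hz
          · rw [abs_of_nonneg hz] at h ⊢
            refine le_trans (le_of_eq ?_) le_self_add
            simp only [g]
            rw [Set.indicator_of_mem (Set.mem_Icc.2 ⟨hz, h⟩)]
          · rw [abs_of_nonpos hz] at h ⊢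
            refine le_trans (le_of_eq ?_) le_add_self
            simp only [g]
            rw [Set.indicator_of_mem (Set.mem_Icc.2 ⟨by linarith, h⟩)]
        · exact zero_le
    _ = ENNReal.ofReal (r ^ (1 - q) / (1 - q)) + ENNReal.ofReal (r ^ (1 - q) / (1 - q)) := by
        rw [lintegral_add_left hgm, lintegral_neg_eq_self, hg]
    _ = _ := by
        have : 0 ≤ r ^ (1 - q) / (1 - q) := div_nonneg (by positivity) (by linarith)
        rw [← ENNReal.ofReal_add this this]
        congr 1; ring

lemma le_dimH_of_energy (F : ℝ → ℝ × ℝ × ℝ) (hF : Continuous F) (I : Set ℝ)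
    (hIm : MeasurableSet I) (hI : volume I ≠ 0) (s : ℝ) (hs : 0 < s)
    (h : ∀ᵐ x ∂(volume.restrict I), ∑' j : ℕ, ENNReal.ofReal (((1 / 2 : ℝ) ^ j) ^ (-s)) *
      (volume.restrict I) {y | dist (F x) (F y) ≤ (1 / 2 : ℝ) ^ j} < ⊤) :
    ENNReal.ofReal s ≤ dimH (F '' I) := by
  set ν := volume.restrict I with hν
  let A : ℕ → Set ℝ := fun M => {x | x ∈ I ∧
    ∀ j : ℕ, ν {y | dist (F x) (F y) ≤ (1 / 2 : ℝ) ^ j} ≤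
      ENNReal.ofReal (M * ((1 / 2 : ℝ) ^ j) ^ s)}
  have hA : ∃ M, ν (A M) ≠ 0 := by
    by_contra hcon
    push Not at hcon
    have h0 : ∀ᵐ x ∂ν, ∀ M, x ∉ A M := by
      rw [ae_all_iff]
      intro M
      exact measure_eq_zero_iff_ae_notMem.1 (hcon M)
    have hfalse : ∀ᵐ x ∂ν, False := by
      filter_upwards [h0, h, ae_restrict_mem hIm] with x hx0 hx hxI
      obtain ⟨M, hM⟩ := ENNReal.exists_nat_gt hx.ne
      refine hx0 M ⟨hxI, fun j => ?_⟩
      have h1 := (ENNReal.le_tsum j).trans hM.le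
      have hrj : (0 : ℝ) < (1 / 2 : ℝ) ^ j := by positivity
      have e : ENNReal.ofReal (((1 / 2 : ℝ) ^ j) ^ s) * ENNReal.ofReal (((1 / 2 : ℝ) ^ j) ^ (-s)) = 1 := by
        rw [← ENNReal.ofReal_mul (by positivity), ← Real.rpow_add hrj]
        simp
      calc ν {y | dist (F x) (F y) ≤ (1 / 2 : ℝ) ^ j}
          = ENNReal.ofReal (((1 / 2 : ℝ) ^ j) ^ s) * (ENNReal.ofReal (((1 / 2 : ℝ) ^ j) ^ (-s)) *
            ν {y | dist (F x) (F y) ≤ (1 / 2 : ℝ) ^ j}) := by rw [← mul_assoc, e, one_mul]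
        _ ≤ ENNReal.ofReal (((1 / 2 : ℝ) ^ j) ^ s) * M := by gcongr
        _ = _ := by
          rw [mul_comm, ENNReal.ofReal_mul (by positivity), ENNReal.ofReal_natCast]
    rw [Filter.eventually_false_iff_eq_bot, ae_eq_bot, hν, Measure.restrict_eq_zero] at hfalse
    exact hI hfalse
  obtain ⟨M, hM⟩ := hA
  set c : ℝ := M * 2 ^ s + 1 with hc
  have hc0 : 0 < c := by positivity
  set η : Measure (ℝ × ℝ × ℝ) := (ν.restrict (A M)).map F with hη
  have hbd : ∀ S : Set (ℝ × ℝ × ℝ), Metric.ediam S ≤ 1 →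
      η S ≤ ENNReal.ofReal c * Metric.ediam S ^ s := by
    intro S hS
    have hcl : MeasurableSet (F ⁻¹' closure S) := (isClosed_closure.preimage hF).measurableSet
    have h1 : η S ≤ ν (F ⁻¹' closure S ∩ A M) := by
      refine (measure_mono subset_closure).trans (le_of_eq ?_)
      rw [hη, Measure.map_apply hF.measurable isClosed_closure.measurableSet,
        Measure.restrict_apply hcl]
    rcases (F ⁻¹' closure S ∩ A M).eq_empty_or_nonempty with he | ⟨x, hxS, hxI, hx⟩
    · rw [he, measure_empty] at h1
      exact h1.trans zero_le
    have hSfin : Metric.ediam S ≠ ⊤ := ne_top_of_le_ne_top ENNReal.one_ne_top hS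
    set d := (Metric.ediam S).toReal with hd
    have hdS : Metric.ediam S = ENNReal.ofReal d := (ENNReal.ofReal_toReal hSfin).symm
    have hd1 : d ≤ 1 := by
      rw [hd]; exact ENNReal.toReal_le_of_le_ofReal zero_le_one (by simpa using hS)
    have h2 : ∀ j : ℕ, d ≤ (1 / 2 : ℝ) ^ j → η S ≤ ENNReal.ofReal (M * ((1 / 2 : ℝ) ^ j) ^ s) := by
      intro j hj
      refine h1.trans ((measure_mono ?_).trans (hx j))
      rintro y ⟨hyS, -⟩
      have h3 : edist (F x) (F y) ≤ Metric.ediam S := by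
        rw [← Metric.ediam_closure]; exact Metric.edist_le_ediam_of_mem hxS hyS
      rw [hdS, edist_dist, ENNReal.ofReal_le_ofReal_iff ENNReal.toReal_nonneg] at h3
      exact h3.trans hj
    rcases eq_or_lt_of_le (ENNReal.toReal_nonneg : 0 ≤ d) with h0 | h0
    · have hlim : Filter.Tendsto (fun j : ℕ => ENNReal.ofReal (M * ((1 / 2 : ℝ) ^ j) ^ s))
          Filter.atTop (nhds 0) := by
        have t1 : Filter.Tendsto (fun j : ℕ => (1 / 2 : ℝ) ^ j) Filter.atTop (nhds 0) :=
          tendsto_pow_atTop_nhds_zero_of_lt_one (by norm_num) (by norm_num)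
        have t2 := (t1.rpow_const (p := s) (Or.inr hs.le)).const_mul (M : ℝ)
        have t3 := ENNReal.tendsto_ofReal t2
        simpa [Real.zero_rpow hs.ne'] using t3
      have : η S ≤ 0 := ge_of_tendsto' hlim fun j => h2 j (by rw [hd, ← h0]; positivity)
      exact this.trans zero_le
    · obtain ⟨j, hj1, hj2⟩ := exists_nat_pow_near_of_lt_one h0 hd1
        (by norm_num : (0 : ℝ) < 1 / 2) (by norm_num)
      refine (h2 j hj2).trans ?_
      rw [hdS, ENNReal.ofReal_rpow_of_pos h0, ← ENNReal.ofReal_mul hc0.le]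
      apply ENNReal.ofReal_le_ofReal
      have h5 : ((1 / 2 : ℝ) ^ j) ^ s ≤ (2 * d) ^ s := by
        apply Real.rpow_le_rpow (by positivity) _ hs.le
        rw [pow_succ] at hj1
        linarith
      rw [Real.mul_rpow (by norm_num) h0.le] at h5
      have h6 : 0 ≤ d ^ s := by positivity
      calc (M : ℝ) * ((1 / 2 : ℝ) ^ j) ^ s ≤ M * (2 ^ s * d ^ s) := by gcongr
        _ ≤ c * d ^ s := by rw [hc]; nlinarith
  have hle : (ENNReal.ofReal c)⁻¹ • η ≤ μH[s] := by
    refine Measure.le_hausdorffMeasure s _ 1 one_pos fun S hS => ?_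
    rw [Measure.smul_apply, smul_eq_mul]
    have hcne : ENNReal.ofReal c ≠ 0 := by simpa using hc0
    calc _ ≤ (ENNReal.ofReal c)⁻¹ * (ENNReal.ofReal c * Metric.ediam S ^ s) := by
          gcongr; exact hbd S hS
      _ = _ := by
          rw [← mul_assoc, ENNReal.inv_mul_cancel hcne ENNReal.ofReal_ne_top, one_mul]
  have hpos : μH[s] (F '' I) ≠ 0 := by
    have h1 := hle (F '' I)
    rw [Measure.smul_apply, smul_eq_mul] at h1
    have h2 : ν (A M) ≤ η (F '' I) := by
      have h3 := Measure.le_map_apply (μ := ν.restrict (A M)) hF.aemeasurable (F '' I)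
      refine le_trans ?_ h3
      calc ν (A M) = (ν.restrict (A M)) (A M) := by rw [Measure.restrict_apply_self]
        _ ≤ (ν.restrict (A M)) (F ⁻¹' (F '' I)) :=
            measure_mono fun x hx => Set.mem_image_of_mem F hx.1
    intro h0
    rw [h0, nonpos_iff_eq_zero, mul_eq_zero] at h1
    rcases h1 with h1 | h1
    · simp at h1
    · rw [h1] at h2
      exact hM (nonpos_iff_eq_zero.1 h2)
  have := le_dimH_of_hausdorffMeasure_ne_zero (s := F '' I) (d := s.toNNReal)
    (by rwa [Real.coe_toNNReal _ hs.le])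
  exact this

/-- The graph parametrisation. -/
noncomputable def FF (b β : ℝ) (p : (ℕ → ℝ) × (ℕ → ℝ)) (t : ℝ) : ℝ × ℝ × ℝ :=
  (t, VV b β 0 p.1 t, VV b β (-(1/4)) p.2 t)

lemma continuous_FF (b β : ℝ) (hb : 1 < b) (hβ : 0 < β) :
    Continuous (fun q : ((ℕ → ℝ) × (ℕ → ℝ)) × ℝ => FF b β q.1 q.2) := by
  have h1 : Continuous (fun q : ((ℕ → ℝ) × (ℕ → ℝ)) × ℝ => VV b β 0 q.1.1 q.2) :=
    Continuous.comp (g := fun q : (ℕ → ℝ) × ℝ => VV b β 0 q.1 q.2)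
      (f := fun q : ((ℕ → ℝ) × (ℕ → ℝ)) × ℝ => (q.1.1, q.2))
      (continuous_VV b β 0 hb hβ) (by fun_prop)
  have h2 : Continuous (fun q : ((ℕ → ℝ) × (ℕ → ℝ)) × ℝ => VV b β (-(1/4)) q.1.2 q.2) :=
    Continuous.comp (g := fun q : (ℕ → ℝ) × ℝ => VV b β (-(1/4)) q.1 q.2)
      (f := fun q : ((ℕ → ℝ) × (ℕ → ℝ)) × ℝ => (q.1.2, q.2))
      (continuous_VV b β (-(1/4)) hb hβ) (by fun_prop)
  exact continuous_snd.prodMk (h1.prodMk h2)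

lemma continuous_FF_right (b β : ℝ) (hb : 1 < b) (hβ : 0 < β) (p : (ℕ → ℝ) × (ℕ → ℝ)) :
    Continuous (fun t : ℝ => FF b β p t) :=
  Continuous.comp (g := fun q : ((ℕ → ℝ) × (ℕ → ℝ)) × ℝ => FF b β q.1 q.2) (f := fun t => (p, t))
    (continuous_FF b β hb hβ) (by fun_prop)

/-- The event that two points of the graph are `r`-close. -/
def closeSet (b β r : ℝ) : Set (((ℕ → ℝ) × (ℕ → ℝ)) × (ℝ × ℝ)) :=
  {z | dist (FF b β z.1 z.2.1) (FF b β z.1 z.2.2) ≤ r}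

lemma measurableSet_closeSet (b β r : ℝ) (hb : 1 < b) (hβ : 0 < β) :
    MeasurableSet (closeSet b β r) := by
  have hx : Continuous (fun z : ((ℕ → ℝ) × (ℕ → ℝ)) × (ℝ × ℝ) => FF b β z.1 z.2.1) :=
    Continuous.comp (g := fun q : ((ℕ → ℝ) × (ℕ → ℝ)) × ℝ => FF b β q.1 q.2)
      (f := fun z : ((ℕ → ℝ) × (ℕ → ℝ)) × (ℝ × ℝ) => (z.1, z.2.1))
      (continuous_FF b β hb hβ) (by fun_prop)
  have hy : Continuous (fun z : ((ℕ → ℝ) × (ℕ → ℝ)) × (ℝ × ℝ) => FF b β z.1 z.2.2) :=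
    Continuous.comp (g := fun q : ((ℕ → ℝ) × (ℕ → ℝ)) × ℝ => FF b β q.1 q.2)
      (f := fun z : ((ℕ → ℝ) × (ℕ → ℝ)) × (ℝ × ℝ) => (z.1, z.2.2))
      (continuous_FF b β hb hβ) (by fun_prop)
  exact (isClosed_le (hx.dist hy) continuous_const).measurableSet

lemma closeSet_bound (b β : ℝ) (hb : 1 < b) (hβ : β ∈ Set.Ioo (0 : ℝ) (1 / 2)) (k : ℕ)
    {μ : Measure (ℕ → ℝ)} (hμ : IsUniformProductMeasure μ) (I : Set ℝ) (hIm : MeasurableSet I)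
    (hI : I = Set.Icc 0 (1 / (2 * b ^ k))) (γ : ℝ) (hγ : γ = (k : ℝ) / (k + 1)) :
    ∃ D : ℝ, 0 < D ∧ ∀ r : ℝ, 0 < r →
      ((μ.prod μ).prod ((volume.restrict I).prod (volume.restrict I))) (closeSet b β r) ≤
      ENNReal.ofReal (D * r ^ (2 * γ + 1 - 2 * β * γ)) := by
  have := unif_prod_prob hμ
  obtain ⟨hβ0, hβ1⟩ := hβ
  have hγ0 : 0 ≤ γ := by rw [hγ]; positivity
  have hγ1 : γ < 1 := by rw [hγ, div_lt_one (by positivity)]; linarith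
  set q := 2 * β * γ with hq
  have hq1 : q < 1 := by nlinarith
  obtain ⟨D1, hD1, H1⟩ := VV_small_ball b β 0 hb hβ0 k hμ
  obtain ⟨D2, hD2, H2⟩ := VV_small_ball b β (-(1/4)) hb hβ0 k hμ
  rw [← hγ] at H1 H2
  have hbk : 0 < b ^ k := by positivity
  have h1q : 0 < 1 - q := by linarith
  set L : ℝ := 1 / (2 * b ^ k) with hL
  have hL0 : 0 < L := by positivity
  have hvol : (volume.restrict I) Set.univ = ENNReal.ofReal L := by
    rw [Measure.restrict_apply_univ, hI, Real.volume_Icc, sub_zero]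
  refine ⟨D1 * D2 * (2 / (1 - q)) * L, by positivity, fun r hr => ?_⟩
  have hE := measurableSet_closeSet b β r hb hβ0
  -- pointwise bound
  have hpt : ∀ x ∈ I, ∀ y ∈ I, x ≠ y → (μ.prod μ) ((fun p => (p, (x, y))) ⁻¹' closeSet b β r) ≤
      ENNReal.ofReal (D1 * D2 * r ^ (2 * γ)) *
        (if |x - y| ≤ r then ENNReal.ofReal (|x - y| ^ (-q)) else 0) := by
    intro x hx y hy hxy
    rw [hI] at hx hy
    have hle : |x - y| ≤ L := by
      rw [abs_le]; constructor <;> linarith [hx.1, hx.2, hy.1, hy.2]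
    have hsub : (fun p => (p, (x, y))) ⁻¹' closeSet b β r ⊆
        {p : (ℕ → ℝ) × (ℕ → ℝ) | |x - y| ≤ r} ∩ {Θ | |VV b β 0 Θ x - VV b β 0 Θ y| ≤ r} ×ˢ
          {Λ | |VV b β (-(1/4)) Λ x - VV b β (-(1/4)) Λ y| ≤ r} := by
      intro p hp
      have hp' : dist (FF b β p x) (FF b β p y) ≤ r := hp
      rw [FF, FF, Prod.dist_eq, Prod.dist_eq, max_le_iff, max_le_iff] at hp'
      simp only [Real.dist_eq] at hp'
      exact ⟨hp'.1, hp'.2.1, hp'.2.2⟩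
    refine (measure_mono hsub).trans ?_
    split_ifs with hc
    · refine (measure_mono Set.inter_subset_right).trans ?_
      rw [Measure.prod_prod]
      refine (mul_le_mul' (H1 x y hxy hle r hr) (H2 x y hxy hle r hr)).trans (le_of_eq ?_)
      have hh : 0 < |x - y| := abs_pos.2 (sub_ne_zero.2 hxy)
      rw [← ENNReal.ofReal_mul (by positivity), ← ENNReal.ofReal_mul (by positivity)]
      congr 1
      have e1 : (r / |x - y| ^ β) ^ γ = r ^ γ * |x - y| ^ (-(β * γ)) := by
        rw [Real.div_rpow hr.le (by positivity), ← Real.rpow_mul hh.le, Real.rpow_neg hh.le,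
          div_eq_mul_inv]
      have e2 : r ^ (2 * γ) = r ^ γ * r ^ γ := by rw [← Real.rpow_add hr]; congr 1; ring
      have e3 : |x - y| ^ (-q) = |x - y| ^ (-(β * γ)) * |x - y| ^ (-(β * γ)) := by
        rw [← Real.rpow_add hh]; congr 1; rw [hq]; ring
      rw [e1, e2, e3]; ring
    · have : {p : (ℕ → ℝ) × (ℕ → ℝ) | |x - y| ≤ r} = ∅ := by
        ext p; simpa using hc
      rw [this, Set.empty_inter, measure_empty]
      exact zero_le
  rw [Measure.prod_apply_symm hE, lintegral_prod _ (measurable_measure_prodMk_right hE).aemeasurable]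
  calc ∫⁻ x in I, ∫⁻ y in I, (μ.prod μ) ((fun p => (p, (x, y))) ⁻¹' closeSet b β r)
      ≤ ∫⁻ x in I, ENNReal.ofReal (D1 * D2 * r ^ (2 * γ)) *
          ENNReal.ofReal (2 * (r ^ (1 - q) / (1 - q))) := by
        apply setLIntegral_mono' hIm
        intro x hx
        calc ∫⁻ y in I, (μ.prod μ) ((fun p => (p, (x, y))) ⁻¹' closeSet b β r)
            ≤ ∫⁻ y in I, ENNReal.ofReal (D1 * D2 * r ^ (2 * γ)) *
                (if |x - y| ≤ r then ENNReal.ofReal (|x - y| ^ (-q)) else 0) := by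
              apply lintegral_mono_ae
              have hne : ∀ᵐ y ∂(volume.restrict I), y ≠ x :=
                ae_restrict_of_ae (Measure.ae_ne volume x)
              filter_upwards [ae_restrict_mem hIm, hne] with y hy hyx
              exact hpt x hx y hy hyx.symm
          _ ≤ ∫⁻ y, ENNReal.ofReal (D1 * D2 * r ^ (2 * γ)) *
                (if |x - y| ≤ r then ENNReal.ofReal (|x - y| ^ (-q)) else 0) :=
              setLIntegral_le_lintegral _ _
          _ = ENNReal.ofReal (D1 * D2 * r ^ (2 * γ)) *
                ∫⁻ y, (if |x - y| ≤ r then ENNReal.ofReal (|x - y| ^ (-q)) else 0) := by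
              rw [lintegral_const_mul' _ _ ENNReal.ofReal_ne_top]
          _ ≤ _ := by
              gcongr
              exact lintegral_abs_rpow_le x r q hr hq1
    _ = _ := by
        rw [lintegral_const, hvol, ← ENNReal.ofReal_mul (by positivity),
          ← ENNReal.ofReal_mul (by positivity)]
        congr 1
        have : r ^ (2 * γ + 1 - q) = r ^ (2 * γ) * r ^ (1 - q) := by
          rw [← Real.rpow_add hr]; congr 1; ring
        rw [this]; ring

lemma ae_le_dimH (b β : ℝ) (hb : 1 < b) (hβ : β ∈ Set.Ioo (0 : ℝ) (1 / 2)) (k : ℕ) (hk : 0 < k)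
    {μ : Measure (ℕ → ℝ)} (hμ : IsUniformProductMeasure μ) :
    ∀ᵐ p ∂ μ.prod μ, ENNReal.ofReal ((k : ℝ) / (k + 1) * (3 - 2 * β)) ≤
      dimH (Wgraph b β p.1 p.2) := by
  have := unif_prod_prob hμ
  have hβ' := hβ
  obtain ⟨hβ0, hβ1⟩ := hβ
  have hk0 : (0 : ℝ) < k := by exact_mod_cast hk
  set γ := (k : ℝ) / (k + 1) with hγ
  have hγ0 : 0 < γ := by positivity
  have hγ1 : γ < 1 := by rw [hγ, div_lt_one (by positivity)]; linarith
  set s := γ * (3 - 2 * β) with hs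
  have hs0 : 0 < s := by apply mul_pos hγ0; linarith
  have hbk : 1 ≤ b ^ k := one_le_pow₀ hb.le
  set I : Set ℝ := Set.Icc 0 (1 / (2 * b ^ k)) with hI
  have hIm : MeasurableSet I := measurableSet_Icc
  have hIvol : volume I ≠ 0 := by
    rw [hI, Real.volume_Icc]
    simp only [ne_eq, ENNReal.ofReal_eq_zero, not_le, sub_zero]
    positivity
  have hI1 : I ⊆ Set.Icc 0 1 := by
    apply Set.Icc_subset_Icc_right
    rw [div_le_one (by positivity)]; linarith
  obtain ⟨D, hD, HD⟩ := closeSet_bound b β hb hβ' k hμ I hIm hI γ hγ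
  have hE : ∀ j : ℕ, MeasurableSet (closeSet b β ((1 / 2 : ℝ) ^ j)) :=
    fun j => measurableSet_closeSet b β _ hb hβ0
  set ν := volume.restrict I with hν
  -- total energy
  have hfin : ∫⁻ p, ∑' j : ℕ, ENNReal.ofReal (((1 / 2 : ℝ) ^ j) ^ (-s)) *
      (ν.prod ν) (Prod.mk p ⁻¹' closeSet b β ((1 / 2 : ℝ) ^ j)) ∂(μ.prod μ) ≠ ⊤ := by
    rw [lintegral_tsum (fun j => ((measurable_measure_prodMk_left (hE j)).const_mul _).aemeasurable)]
    have hj : ∀ j : ℕ, ∫⁻ p, ENNReal.ofReal (((1 / 2 : ℝ) ^ j) ^ (-s)) *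
        (ν.prod ν) (Prod.mk p ⁻¹' closeSet b β ((1 / 2 : ℝ) ^ j)) ∂(μ.prod μ) ≤
        ENNReal.ofReal (D * ((1 / 2 : ℝ) ^ (1 - γ)) ^ j) := by
      intro j
      have hr : (0 : ℝ) < (1 / 2 : ℝ) ^ j := by positivity
      rw [lintegral_const_mul' _ _ ENNReal.ofReal_ne_top, ← Measure.prod_apply (hE j)]
      refine (mul_le_mul_right (HD _ hr) _).trans (le_of_eq ?_)
      rw [← ENNReal.ofReal_mul (by positivity)]
      congr 1
      have e : ((1 / 2 : ℝ) ^ (1 - γ)) ^ j = ((1 / 2 : ℝ) ^ j) ^ (-s) *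
          ((1 / 2 : ℝ) ^ j) ^ (2 * γ + 1 - 2 * β * γ) := by
        rw [← Real.rpow_add hr, ← Real.rpow_natCast, ← Real.rpow_natCast,
          ← Real.rpow_mul (by norm_num), ← Real.rpow_mul (by norm_num)]
        congr 1
        rw [hs]; ring
      rw [e]; ring
    refine ne_top_of_le_ne_top ?_ (ENNReal.tsum_le_tsum hj)
    have hsum : Summable (fun j : ℕ => D * ((1 / 2 : ℝ) ^ (1 - γ)) ^ j) :=
      (summable_geometric_of_lt_one (by positivity)
        (Real.rpow_lt_one (by norm_num) (by norm_num) (by linarith))).mul_left D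
    exact hsum.tsum_ofReal_ne_top
  have hmeas : Measurable (fun p => ∑' j : ℕ, ENNReal.ofReal (((1 / 2 : ℝ) ^ j) ^ (-s)) *
      (ν.prod ν) (Prod.mk p ⁻¹' closeSet b β ((1 / 2 : ℝ) ^ j))) :=
    Measurable.ennreal_tsum fun j => (measurable_measure_prodMk_left (hE j)).const_mul _
  filter_upwards [ae_lt_top hmeas hfin] with p hp
  have hFc := continuous_FF_right b β hb hβ0 p
  have hsub : (fun t => FF b β p t) '' I ⊆ Wgraph b β p.1 p.2 := by
    rintro _ ⟨t, ht, rfl⟩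
    refine ⟨t, hI1 ht, ?_⟩
    rw [W1_eq_VV, W2_eq_VV]; rfl
  refine le_trans ?_ (dimH_mono hsub)
  refine le_dimH_of_energy _ hFc I hIm hIvol s hs0 ?_
  have hEp : ∀ j : ℕ, MeasurableSet (Prod.mk p ⁻¹' closeSet b β ((1 / 2 : ℝ) ^ j)) :=
    fun j => measurable_prodMk_left (hE j)
  have hm2 : ∀ j : ℕ, Measurable (fun x => ENNReal.ofReal (((1 / 2 : ℝ) ^ j) ^ (-s)) *
      ν {y | dist (FF b β p x) (FF b β p y) ≤ (1 / 2 : ℝ) ^ j}) :=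
    fun j => (measurable_measure_prodMk_left (ν := ν) (hEp j)).const_mul _
  refine ae_lt_top (Measurable.ennreal_tsum hm2) ?_
  rw [lintegral_tsum (fun j => (hm2 j).aemeasurable)]
  refine ne_top_of_le_ne_top hp.ne (le_of_eq ?_)
  refine tsum_congr fun j => ?_
  rw [lintegral_const_mul' _ _ ENNReal.ofReal_ne_top, Measure.prod_apply (hEp j)]
  rfl

/-- for a.e. pair of phase sequences, the Hausdorff dimension of the
graph of the random vector-valued Weierstrass function equals `3 - 2β`. -/
theorem stmt_0 (b β : ℝ) (hb : 1 < b) (hβ : β ∈ Set.Ioo (0 : ℝ) (1 / 2))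
    (μ : Measure (ℕ → ℝ)) (hμ : IsUniformProductMeasure μ) :
    ∀ᵐ p ∂ μ.prod μ, dimH (Wgraph b β p.1 p.2) = ENNReal.ofReal (3 - 2 * β) := by
  have hall : ∀ᵐ p ∂ μ.prod μ, ∀ k : ℕ,
      ENNReal.ofReal (((k + 1 : ℕ) : ℝ) / ((k + 1 : ℕ) + 1) * (3 - 2 * β)) ≤
      dimH (Wgraph b β p.1 p.2) := by
    rw [ae_all_iff]
    exact fun k => ae_le_dimH b β hb hβ (k + 1) (Nat.succ_pos k) hμ
  filter_upwards [hall] with p hp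
  refine le_antisymm (Wgraph_dimH_le b β hb hβ p.1 p.2) ?_
  have h1 : Filter.Tendsto (fun k : ℕ => (k : ℝ) / (k + 1)) Filter.atTop (nhds 1) :=
    tendsto_natCast_div_add_atTop (1 : ℝ)
  have h2 := (h1.comp (Filter.tendsto_add_atTop_nat 1)).mul_const (3 - 2 * β)
  rw [one_mul] at h2
  exact le_of_tendsto' (ENNReal.tendsto_ofReal h2) hp
end

section
/- Let b > 1 and β ∈ (0, 1/2), and let s ∈ (2, 3 − 2β). Then the expectation over (Θ, Λ), with respect to the infinite product of uniform measures on [0,1], of the s-energy I_s(μ_{Θ,Λ}) = ∫₀¹∫₀¹ ((x − y)² + |f_{Θ,Λ}(x) − f_{Θ,Λ}(y)|²)^{−s/2} dx dy is finite; that is, ∫∫ I_s(μ_{Θ,Λ}) dΘ dΛ < ∞. -/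
open MeasureTheory

section aux

open Set ENNReal

lemma lint_scale (g : ℝ → ℝ≥0∞) (hg : Measurable g) (a q : ℝ) (hq : q ≠ 0) :
    ∫⁻ w, g (a + q * w) = ENNReal.ofReal |q⁻¹| * ∫⁻ u, g u := by
  have h1 : ∫⁻ w, g (a + q * w) = ∫⁻ u, g (a + u) ∂(Measure.map (q * ·) volume) := by
    rw [lintegral_map (by fun_prop) (by fun_prop)]
  rw [h1, Real.map_volume_mul_left hq, lintegral_smul_measure, lintegral_add_left_eq_self, smul_eq_mul]

/-- truncated singular kernel -/
noncomputable def singK (γ : ℝ) (t : ℝ) : ℝ≥0∞ :=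
  (Ioc (0:ℝ) 2).indicator (fun t => ENNReal.ofReal (t ^ γ)) |t|

lemma singK_meas (γ : ℝ) : Measurable (singK γ) := by
  unfold singK
  have : Measurable ((Ioc (0:ℝ) 2).indicator (fun t => ENNReal.ofReal (t ^ γ))) :=
    Measurable.indicator (by fun_prop) measurableSet_Ioc
  exact this.comp (by fun_prop)

lemma singK_fin (γ : ℝ) (h : -1 < γ) : ∫⁻ t, singK γ t < ⊤ := by
  have h1 : IntegrableOn (fun t : ℝ => t ^ γ) (Ioc 0 2) volume :=
    (intervalIntegrable_iff_integrableOn_Ioc_of_le (by norm_num)).1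
      (intervalIntegral.intervalIntegrable_rpow' h)
  have h2 : ∫⁻ t in Ioc (0:ℝ) 2, ENNReal.ofReal (t ^ γ) < ⊤ := by
    have := h1.lintegral_lt_top
    exact this
  set k : ℝ → ℝ≥0∞ := (Ioc (0:ℝ) 2).indicator (fun t => ENNReal.ofReal (t ^ γ)) with hk
  have hkm : Measurable k := Measurable.indicator (by fun_prop) measurableSet_Ioc
  have h3 : ∫⁻ t, k t < ⊤ := by rw [hk, lintegral_indicator measurableSet_Ioc]; exact h2
  calc ∫⁻ t, singK γ t ≤ ∫⁻ t, (k t + k (0 + (-1) * t)) := by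
        apply lintegral_mono
        intro t
        show k |t| ≤ _
        rcases abs_cases t with ⟨h, _⟩ | ⟨h, _⟩ <;> rw [h]
        · exact le_self_add
        · simp
    _ = (∫⁻ t, k t) + (∫⁻ t, k t) := by
        rw [lintegral_add_left hkm, lint_scale k hkm _ _ (by norm_num)]; simp
    _ < ⊤ := by simp [h3]

/-- square root of the arcsine density -/
noncomputable def EE (u : ℝ) : ℝ≥0∞ :=
  (Ioo (-1:ℝ) 1).indicator (fun u => ENNReal.ofReal ((1 - u ^ 2) ^ (-(1/4) : ℝ))) u

@[fun_prop]
lemma EE_meas : Measurable EE := by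
  unfold EE
  exact Measurable.indicator (by fun_prop) measurableSet_Ioo

lemma EE_fin : ∫⁻ u, EE u ^ 3 < ⊤ := by
  have hm := singK_meas (-(3/4))
  calc ∫⁻ u, EE u ^ 3 ≤ ∫⁻ u, (singK (-(3/4)) (1 + (-1) * u) + singK (-(3/4)) (1 + 1 * u)) := by
        apply lintegral_mono
        intro u
        by_cases hu : u ∈ Ioo (-1:ℝ) 1
        · have hu1 := hu.1
          have hu2 := hu.2
          have e1 : EE u ^ 3 = ENNReal.ofReal ((1 - u ^ 2) ^ (-(3/4) : ℝ)) := by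
            have : 0 < 1 - u ^ 2 := by nlinarith
            simp only [EE, indicator_of_mem hu]
            rw [← ENNReal.ofReal_pow (by positivity), ← Real.rpow_natCast, ← Real.rpow_mul this.le]
            norm_num
          simp only [e1]
          rcases le_total 0 u with h0 | h0
          · refine le_trans ?_ le_self_add
            have ha : |1 + -1 * u| = 1 - u := by rw [abs_of_pos] <;> linarith
            unfold singK
            rw [ha, indicator_of_mem (by constructor <;> linarith)]
            apply ENNReal.ofReal_le_ofReal
            apply Real.rpow_le_rpow_of_nonpos (by linarith) (by nlinarith) (by norm_num)
          · refine le_trans ?_ le_add_self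
            have ha : |1 + 1 * u| = 1 + u := by rw [abs_of_pos] <;> linarith
            unfold singK
            rw [ha, indicator_of_mem (by constructor <;> linarith)]
            apply ENNReal.ofReal_le_ofReal
            apply Real.rpow_le_rpow_of_nonpos (by linarith) (by nlinarith) (by norm_num)
        · simp [EE, indicator_of_notMem hu]
    _ < ⊤ := by
        rw [lintegral_add_left (by fun_prop), lint_scale _ hm _ _ (by norm_num),
          lint_scale _ hm _ _ (by norm_num)]
        have := singK_fin (-(3/4)) (by norm_num)
        simp [this]

lemma sin_half (φ : ℝ → ℝ≥0∞) :
    ∫⁻ x in Ioo (-(Real.pi/2)) (Real.pi/2), φ (Real.sin x) ≤ ∫⁻ u, EE u ^ 2 * φ u := by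
  have h := lintegral_image_eq_lintegral_abs_deriv_mul (s := Ioo (-(Real.pi/2)) (Real.pi/2))
    (f := Real.sin) (f' := Real.cos) measurableSet_Ioo
    (fun x _ => (Real.hasDerivAt_sin x).hasDerivWithinAt)
    (Real.injOn_sin.mono Ioo_subset_Icc_self) (fun u => EE u ^ 2 * φ u)
  calc _ = ∫⁻ x in Ioo (-(Real.pi/2)) (Real.pi/2),
            ENNReal.ofReal |Real.cos x| * (EE (Real.sin x) ^ 2 * φ (Real.sin x)) := by
        apply setLIntegral_congr_fun measurableSet_Ioo
        intro x hx
        have hc := Real.cos_pos_of_mem_Ioo hx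
        have hsc := Real.sin_sq_add_cos_sq x
        have hmem : Real.sin x ∈ Ioo (-1:ℝ) 1 := by constructor <;> nlinarith
        have he : EE (Real.sin x) ^ 2 = ENNReal.ofReal ((Real.cos x)⁻¹) := by
          simp only [EE, indicator_of_mem hmem]
          have : 1 - Real.sin x ^ 2 = Real.cos x ^ 2 := by linarith
          rw [this, ← ENNReal.ofReal_pow (by positivity), ← Real.rpow_natCast, ← Real.rpow_natCast,
            ← Real.rpow_mul hc.le, ← Real.rpow_mul hc.le, ← Real.rpow_neg_one]
          norm_num
        simp only [he]
        rw [← mul_assoc, ← ENNReal.ofReal_mul (abs_nonneg _), abs_of_pos hc, mul_inv_cancel₀ hc.ne']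
        simp
    _ = _ := h.symm
    _ ≤ _ := setLIntegral_le_lintegral _ _

lemma sin_one (φ : ℝ → ℝ≥0∞) (hφ : Measurable φ) (r : ℝ) :
    ∫⁻ α in Icc (0:ℝ) 1, φ (Real.sin (2 * Real.pi * (α + r))) ≤ ∫⁻ u, EE u ^ 2 * φ u := by
  have hpi := Real.pi_pos
  set I := ∫⁻ u, EE u ^ 2 * φ u
  have hφs : Measurable fun x => φ (Real.sin x) := by fun_prop
  have key : ∫⁻ x in Ioc (2*Real.pi*r) (2*Real.pi*r + 2*Real.pi), φ (Real.sin x) ≤ 2 * I := by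
    have e := (isAddFundamentalDomain_Ioc Real.two_pi_pos (2*Real.pi*r) volume).setLIntegral_eq
      (isAddFundamentalDomain_Ioc Real.two_pi_pos (-(Real.pi/2)) volume)
      (fun x => φ (Real.sin x)) (by
        rintro ⟨g, hg⟩ x
        obtain ⟨n, rfl⟩ := AddSubgroup.mem_zmultiples_iff.1 hg
        have : (n • (2 * Real.pi)) + x = x + n * (2 * Real.pi) := by simp; ring
        show φ (Real.sin (n • (2 * Real.pi) + x)) = _
        rw [this, Real.sin_add_int_mul_two_pi])
    rw [e]
    have hsub : Ioc (-(Real.pi/2)) (-(Real.pi/2) + 2 * Real.pi) ⊆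
        Ioc (-(Real.pi/2)) (Real.pi/2) ∪ Ioc (Real.pi/2) (3*Real.pi/2) := by
      intro x hx
      rcases le_or_gt x (Real.pi/2) with h | h
      · exact Or.inl ⟨hx.1, h⟩
      · exact Or.inr ⟨h, by linarith [hx.2]⟩
    refine (lintegral_mono_set hsub).trans ((lintegral_union_le _ _ _).trans ?_)
    rw [two_mul]
    have hA : ∫⁻ x in Ioc (-(Real.pi/2)) (Real.pi/2), φ (Real.sin x) ≤ I := by
      rw [setLIntegral_congr Ioo_ae_eq_Ioc.symm]; exact sin_half φ
    have hB : ∫⁻ x in Ioc (Real.pi/2) (3*Real.pi/2), φ (Real.sin x) ≤ I := by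
      rw [setLIntegral_congr Ioo_ae_eq_Ioc.symm]
      refine le_trans (le_of_eq ?_) (sin_half φ)
      rw [← lintegral_indicator measurableSet_Ioo, ← lintegral_indicator measurableSet_Ioo,
        ← lintegral_sub_left_eq_self _ Real.pi]
      congr 1 with x
      by_cases hx : x ∈ Ioo (-(Real.pi/2)) (Real.pi/2)
      · rw [indicator_of_mem hx, indicator_of_mem, Real.sin_pi_sub]
        constructor <;> linarith [hx.1, hx.2]
      · rw [indicator_of_notMem hx, indicator_of_notMem]
        intro h
        exact hx ⟨by linarith [h.2], by linarith [h.1]⟩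
    exact add_le_add hA hB
  rw [setLIntegral_congr Ioc_ae_eq_Icc.symm]
  set ψ : ℝ → ℝ≥0∞ := (Ioc (2*Real.pi*r) (2*Real.pi*r + 2*Real.pi)).indicator fun x => φ (Real.sin x)
    with hψ
  have hψm : Measurable ψ := hφs.indicator measurableSet_Ioc
  have e2 : ∫⁻ α in Ioc (0:ℝ) 1, φ (Real.sin (2 * Real.pi * (α + r)))
      = ∫⁻ α, ψ (2*Real.pi*r + 2*Real.pi * α) := by
    rw [← lintegral_indicator measurableSet_Ioc]
    congr 1 with α
    have : 2*Real.pi*r + 2*Real.pi * α = 2 * Real.pi * (α + r) := by ring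
    by_cases hx : α ∈ Ioc (0:ℝ) 1
    · rw [indicator_of_mem hx, hψ, indicator_of_mem, this]
      constructor <;> nlinarith [hx.1, hx.2]
    · rw [indicator_of_notMem hx, hψ, indicator_of_notMem]
      intro h
      exact hx ⟨by nlinarith [h.1], by nlinarith [h.2]⟩
  rw [e2, lint_scale ψ hψm _ _ (by positivity), hψ, lintegral_indicator measurableSet_Ioc]
  calc _ ≤ ENNReal.ofReal (1/2) * (2 * I) := by
        gcongr
        rw [abs_of_pos (by positivity), one_div]
        apply inv_anti₀ (by norm_num)
        linarith [Real.pi_gt_three]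
    _ = I := by
        rw [← mul_assoc]
        have : ENNReal.ofReal (1/2) * 2 = 1 := by
          rw [show (2:ℝ≥0∞) = ENNReal.ofReal 2 by simp, ← ENNReal.ofReal_mul (by norm_num)]; norm_num
        rw [this, one_mul]

lemma amgm3 (a b c : ℝ≥0∞) : a^2 * (b^2 * c^2) ≤ a^3*b^3 + (a^3*c^3 + b^3*c^3) := by
  have key : ∀ x y z : ℝ≥0∞, x * y * z ≤ x^3 + (y^3 + z^3) := by
    intro x y z
    have hx : x ≤ max x (max y z) := le_max_left _ _
    have hy : y ≤ max x (max y z) := (le_max_left _ _).trans (le_max_right _ _)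
    have hz : z ≤ max x (max y z) := (le_max_right _ _).trans (le_max_right _ _)
    have h : x * y * z ≤ (max x (max y z)) ^ 3 := by
      rw [pow_succ, pow_two]
      exact mul_le_mul' (mul_le_mul' hx hy) hz
    refine h.trans ?_
    rcases max_choice x (max y z) with h | h <;> rw [h]
    · exact le_self_add
    · rcases max_choice y z with h | h <;> rw [h]
      · exact le_add_left le_self_add
      · exact le_add_left le_add_self
  calc _ = (a*b) * (a*c) * (b*c) := by ring
    _ ≤ _ := key _ _ _
    _ = _ := by simp only [mul_pow]

lemma triple (g : ℝ → ℝ≥0∞) (hg : Measurable g) (c q1 q2 q3 r1 r2 r3 : ℝ)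
    (h1 : q1 ≠ 0) (h2 : q2 ≠ 0) (h3 : q3 ≠ 0) :
    ∫⁻ x in Icc (0:ℝ) 1, ∫⁻ y in Icc (0:ℝ) 1, ∫⁻ z in Icc (0:ℝ) 1,
      g (c + q1 * Real.sin (2 * Real.pi * (x + r1)) + q2 * Real.sin (2 * Real.pi * (y + r2))
        + q3 * Real.sin (2 * Real.pi * (z + r3)))
    ≤ (∫⁻ u, EE u ^ 3) ^ 2 * (ENNReal.ofReal |q1⁻¹| + ENNReal.ofReal |q2⁻¹| + ENNReal.ofReal |q3⁻¹|)
      * ∫⁻ u, g u := by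
  set M := ∫⁻ u, EE u ^ 3 with hM
  set G := ∫⁻ u, g u
  calc _ ≤ ∫⁻ x in Icc (0:ℝ) 1, ∫⁻ y in Icc (0:ℝ) 1, ∫⁻ w, EE w ^ 2 *
        g (c + q1 * Real.sin (2 * Real.pi * (x + r1)) + q2 * Real.sin (2 * Real.pi * (y + r2))
        + q3 * w) := by
        refine lintegral_mono fun x => lintegral_mono fun y => ?_
        exact sin_one (fun w => g (c + q1 * Real.sin (2 * Real.pi * (x + r1))
          + q2 * Real.sin (2 * Real.pi * (y + r2)) + q3 * w)) (by fun_prop) r3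
    _ ≤ ∫⁻ x in Icc (0:ℝ) 1, ∫⁻ v, EE v ^ 2 * ∫⁻ w, EE w ^ 2 *
        g (c + q1 * Real.sin (2 * Real.pi * (x + r1)) + q2 * v + q3 * w) := by
        refine lintegral_mono fun x => ?_
        exact sin_one (fun v => ∫⁻ w, EE w ^ 2 * g (c + q1 * Real.sin (2 * Real.pi * (x + r1))
          + q2 * v + q3 * w)) (by fun_prop) r2
    _ ≤ ∫⁻ u, EE u ^ 2 * ∫⁻ v, EE v ^ 2 * ∫⁻ w, EE w ^ 2 * g (c + q1 * u + q2 * v + q3 * w) := by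
        exact sin_one (fun u => ∫⁻ v, EE v ^ 2 * ∫⁻ w, EE w ^ 2 * g (c + q1 * u
          + q2 * v + q3 * w)) (by fun_prop) r1
    _ = ∫⁻ u, ∫⁻ v, ∫⁻ w, EE u ^ 2 * (EE v ^ 2 * EE w ^ 2) * g (c + q1 * u + q2 * v + q3 * w) := by
        refine lintegral_congr fun u => ?_
        rw [← lintegral_const_mul _ (by fun_prop)]
        refine lintegral_congr fun v => ?_
        rw [← lintegral_const_mul _ (by fun_prop), ← lintegral_const_mul _ (by fun_prop)]
        refine lintegral_congr fun w => ?_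
        ring
    _ ≤ ∫⁻ u, ∫⁻ v, ∫⁻ w, (EE u ^ 3 * EE v ^ 3 * g (c + q1 * u + q2 * v + q3 * w)
        + (EE u ^ 3 * EE w ^ 3 * g (c + q1 * u + q2 * v + q3 * w)
        + EE v ^ 3 * EE w ^ 3 * g (c + q1 * u + q2 * v + q3 * w))) := by
        refine lintegral_mono fun u => lintegral_mono fun v => lintegral_mono fun w => ?_
        show _ ≤ _
        rw [← add_mul, ← add_mul]
        gcongr
        exact amgm3 _ _ _
    _ = (∫⁻ u, ∫⁻ v, ∫⁻ w, EE u ^ 3 * EE v ^ 3 * g (c + q1 * u + q2 * v + q3 * w))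
        + ((∫⁻ u, ∫⁻ v, ∫⁻ w, EE u ^ 3 * EE w ^ 3 * g (c + q1 * u + q2 * v + q3 * w))
        + (∫⁻ u, ∫⁻ v, ∫⁻ w, EE v ^ 3 * EE w ^ 3 * g (c + q1 * u + q2 * v + q3 * w))) := by
        rw [← lintegral_add_left (by fun_prop), ← lintegral_add_left (by fun_prop)]
        refine lintegral_congr fun u => ?_
        rw [← lintegral_add_left (by fun_prop), ← lintegral_add_left (by fun_prop)]
        refine lintegral_congr fun v => ?_
        rw [← lintegral_add_left (by fun_prop), ← lintegral_add_left (by fun_prop)]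
    _ = M ^ 2 * (ENNReal.ofReal |q3⁻¹| * G) + (M ^ 2 * (ENNReal.ofReal |q2⁻¹| * G)
        + M ^ 2 * (ENNReal.ofReal |q1⁻¹| * G)) := by
        have gen : ∀ T : ℝ≥0∞, ∫⁻ u, ∫⁻ v, EE u ^ 3 * EE v ^ 3 * T = M ^ 2 * T := by
          intro T
          simp_rw [mul_assoc]
          have : ∀ u, ∫⁻ v, EE u ^ 3 * (EE v ^ 3 * T) = EE u ^ 3 * (M * T) := by
            intro u
            rw [lintegral_const_mul _ (by fun_prop), lintegral_mul_const _ (by fun_prop)]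
          simp_rw [this]
          rw [lintegral_mul_const _ (by fun_prop), ← hM]
          ring
        congr 1
        · rw [← gen]
          refine lintegral_congr fun u => lintegral_congr fun v => ?_
          rw [lintegral_const_mul _ (by fun_prop), lint_scale g hg _ _ h3]
        congr 1
        · rw [← gen]
          refine lintegral_congr fun u => ?_
          rw [lintegral_lintegral_swap (by fun_prop)]
          refine lintegral_congr fun w => ?_
          rw [lintegral_const_mul _ (by fun_prop), ← lint_scale g hg (c + q1 * u + q3 * w) _ h2]
          congr 1
          refine lintegral_congr fun v => ?_
          ring_nf
        · rw [← gen, lintegral_lintegral_swap (by fun_prop)]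
          refine lintegral_congr fun v => ?_
          rw [lintegral_lintegral_swap (by fun_prop)]
          refine lintegral_congr fun w => ?_
          rw [lintegral_const_mul _ (by fun_prop), ← lint_scale g hg (c + q2 * v + q3 * w) _ h1]
          congr 1
          refine lintegral_congr fun u => ?_
          ring_nf
    _ = _ := by ring

lemma unif_eq (μ : Measure (ℕ → ℝ)) (hμ : IsUniformProductMeasure μ)
    [IsProbabilityMeasure (volume.restrict (Icc (0:ℝ) 1))] :
    μ = Measure.infinitePi (fun _ : ℕ => volume.restrict (Icc (0:ℝ) 1)) := by
  apply Measure.eq_infinitePi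
  intro s t ht
  exact hμ s t ht

lemma resample (μ : Measure (ℕ → ℝ)) (hμ : IsUniformProductMeasure μ) (k : ℕ)
    (F : (ℕ → ℝ) → ℝ≥0∞) (hF : Measurable F) :
    ∫⁻ Θ, F Θ ∂μ = ∫⁻ Θ, (∫⁻ α in Icc (0:ℝ) 1, F (Function.update Θ k α)) ∂μ := by
  have hP : IsProbabilityMeasure (volume.restrict (Icc (0:ℝ) 1)) := ⟨by simp⟩
  have hμe := unif_eq μ hμ
  have : IsProbabilityMeasure μ := by rw [hμe]; infer_instance
  have hm : Measurable (fun p : (ℕ → ℝ) × ℝ => Function.update p.1 k p.2) := by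
    rw [measurable_pi_iff]
    intro i
    by_cases h : i = k
    · subst h; simpa using measurable_snd
    · simp only [Function.update_of_ne h]; fun_prop
  have hν : IsUniformProductMeasure (Measure.map (fun p : (ℕ → ℝ) × ℝ => Function.update p.1 k p.2)
      (μ.prod (volume.restrict (Icc (0:ℝ) 1)))) := by
    intro t s hs
    have hms : MeasurableSet {f : ℕ → ℝ | ∀ i ∈ t, f i ∈ s i} :=
      MeasurableSet.pi t.countable_toSet (fun i _ => hs i)
    rw [Measure.map_apply hm hms]
    by_cases hk : k ∈ t
    · have e : (fun p : (ℕ → ℝ) × ℝ => Function.update p.1 k p.2) ⁻¹' {f | ∀ i ∈ t, f i ∈ s i}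
          = {f | ∀ i ∈ t.erase k, f i ∈ s i} ×ˢ s k := by
        ext ⟨f, a⟩
        simp only [mem_preimage, mem_ofPred_eq, mem_prod, Finset.mem_erase]
        constructor
        · intro h
          refine ⟨fun i hi => ?_, ?_⟩
          · have := h i hi.2; rwa [Function.update_of_ne hi.1] at this
          · have := h k hk; rwa [Function.update_self] at this
        · rintro ⟨h1, h2⟩ i hi
          by_cases hik : i = k
          · subst hik; rwa [Function.update_self]
          · rw [Function.update_of_ne hik]; exact h1 i ⟨hik, hi⟩
      rw [e, Measure.prod_prod, hμ _ s hs, Finset.prod_erase_mul _ _ hk]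
    · have e : (fun p : (ℕ → ℝ) × ℝ => Function.update p.1 k p.2) ⁻¹' {f | ∀ i ∈ t, f i ∈ s i}
          = {f | ∀ i ∈ t, f i ∈ s i} ×ˢ univ := by
        ext ⟨f, a⟩
        simp only [mem_preimage, mem_ofPred_eq, mem_prod, mem_univ, and_true]
        refine forall₂_congr fun i hi => ?_
        rw [Function.update_of_ne (by rintro rfl; exact hk hi)]
      rw [e, Measure.prod_prod, hμ _ s hs, measure_univ, mul_one]
  have hνe := unif_eq _ hν
  calc ∫⁻ Θ, F Θ ∂μ = ∫⁻ Θ, F Θ ∂(Measure.map (fun p : (ℕ → ℝ) × ℝ => Function.update p.1 k p.2)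
      (μ.prod (volume.restrict (Icc (0:ℝ) 1)))) := by rw [hνe, ← hμe]
    _ = _ := by
      rw [lintegral_map hF hm]
      exact lintegral_prod (fun p : (ℕ → ℝ) × ℝ => F (Function.update p.1 k p.2))
        (hF.comp hm).aemeasurable

/-- random sine series -/
noncomputable def ZZ (q r : ℕ → ℝ) (Θ : ℕ → ℝ) : ℝ :=
  ∑' n, q n * Real.sin (2 * Real.pi * (Θ n + r n))

lemma ZZ_bd (q r : ℕ → ℝ) (n : ℕ) (Θ : ℕ → ℝ) :
    ‖q n * Real.sin (2 * Real.pi * (Θ n + r n))‖ ≤ ‖q n‖ := by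
  rw [norm_mul]
  exact mul_le_of_le_one_right (norm_nonneg _) (Real.abs_sin_le_one _)

lemma ZZ_cont (q r : ℕ → ℝ) (hq : Summable fun n => ‖q n‖) : Continuous (ZZ q r) := by
  unfold ZZ
  exact continuous_tsum (fun n => by fun_prop) hq (ZZ_bd q r)

lemma ZZ_update (q r : ℕ → ℝ) (hq : Summable fun n => ‖q n‖) (Θ : ℕ → ℝ) (k : ℕ) (a : ℝ) :
    ZZ q r (Function.update Θ k a) = ZZ q r Θ - q k * Real.sin (2 * Real.pi * (Θ k + r k))
      + q k * Real.sin (2 * Real.pi * (a + r k)) := by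
  have hs : Summable fun n => q n * Real.sin (2 * Real.pi * (Θ n + r n)) :=
    Summable.of_norm_bounded hq (fun n => ZZ_bd q r n Θ)
  have h := (hs.hasSum.update k (q k * Real.sin (2 * Real.pi * (a + r k)))).tsum_eq
  have e : Function.update (fun n => q n * Real.sin (2 * Real.pi * (Θ n + r n))) k
      (q k * Real.sin (2 * Real.pi * (a + r k))) =
      fun n => q n * Real.sin (2 * Real.pi * (Function.update Θ k a n + r n)) := by
    ext n
    by_cases hn : n = k
    · subst hn; simp
    · simp [Function.update_of_ne hn]
  rw [e] at h
  unfold ZZ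
  rw [h]; ring

lemma ZZ_bound (μ : Measure (ℕ → ℝ)) (hμ : IsUniformProductMeasure μ) (q r : ℕ → ℝ)
    (hq : Summable fun n => ‖q n‖) (i j k : ℕ) (hij : i ≠ j) (hik : i ≠ k) (hjk : j ≠ k)
    (hi : q i ≠ 0) (hj : q j ≠ 0) (hk : q k ≠ 0) (g : ℝ → ℝ≥0∞) (hg : Measurable g) :
    ∫⁻ Θ, g (ZZ q r Θ) ∂μ ≤ (∫⁻ u, EE u ^ 3) ^ 2 *
      (ENNReal.ofReal |(q i)⁻¹| + ENNReal.ofReal |(q j)⁻¹| + ENNReal.ofReal |(q k)⁻¹|)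
      * ∫⁻ u, g u := by
  have hP : IsProbabilityMeasure (volume.restrict (Icc (0:ℝ) 1)) := ⟨by simp⟩
  have : IsProbabilityMeasure μ := by rw [unif_eq μ hμ]; infer_instance
  have hZ : Measurable (ZZ q r) := (ZZ_cont q r hq).measurable
  have hup : ∀ k : ℕ, Measurable (fun p : (ℕ → ℝ) × ℝ => Function.update p.1 k p.2) := by
    intro k
    rw [measurable_pi_iff]
    intro i
    by_cases h : i = k
    · subst h; simpa using measurable_snd
    · simp only [Function.update_of_ne h]; fun_prop
  have hF1 : Measurable fun Θ => g (ZZ q r Θ) := hg.comp hZ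
  have hF2 : Measurable fun Θ => ∫⁻ z in Icc (0:ℝ) 1, g (ZZ q r (Function.update Θ k z)) :=
    Measurable.lintegral_prod_right' (f := fun p : (ℕ → ℝ) × ℝ =>
      g (ZZ q r (Function.update p.1 k p.2))) (hF1.comp (hup k))
  have hF3 : Measurable fun Θ => ∫⁻ y in Icc (0:ℝ) 1, ∫⁻ z in Icc (0:ℝ) 1,
      g (ZZ q r (Function.update (Function.update Θ j y) k z)) :=
    Measurable.lintegral_prod_right' (f := fun p : (ℕ → ℝ) × ℝ => ∫⁻ z in Icc (0:ℝ) 1,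
      g (ZZ q r (Function.update (Function.update p.1 j p.2) k z))) (hF2.comp (hup j))
  rw [resample μ hμ k _ hF1, resample μ hμ j _ hF2, resample μ hμ i _ hF3]
  refine le_trans (lintegral_mono fun Θ => ?_) (le_of_eq (by
    rw [lintegral_const, measure_univ, mul_one]))
  refine le_trans (le_of_eq ?_) (triple g hg (ZZ q r Θ
    - q i * Real.sin (2 * Real.pi * (Θ i + r i)) - q j * Real.sin (2 * Real.pi * (Θ j + r j))
    - q k * Real.sin (2 * Real.pi * (Θ k + r k))) (q i) (q j) (q k) (r i) (r j) (r k) hi hj hk)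
  refine lintegral_congr fun x => lintegral_congr fun y => lintegral_congr fun z => ?_
  congr 1
  rw [ZZ_update q r hq, ZZ_update q r hq, ZZ_update q r hq, Function.update_of_ne hjk.symm,
    Function.update_of_ne hik.symm, Function.update_of_ne hij.symm]
  ring

lemma pow_rpow (b β : ℝ) (hb : 1 < b) (n : ℕ) : b ^ (-β * (n:ℝ)) = (b ^ (-β)) ^ n := by
  rw [Real.rpow_mul (by linarith), Real.rpow_natCast]

lemma geo (b β : ℝ) (hb : 1 < b) (hβ : 0 < β) : Summable fun n : ℕ => b ^ (-β * (n:ℝ)) := by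
  simp_rw [pow_rpow b β hb]
  exact summable_geometric_of_lt_one (by positivity)
    (Real.rpow_lt_one_of_one_lt_of_neg hb (by linarith))

lemma q_lower (b β h : ℝ) (hb : 1 < b) (hβ : 0 < β) (n k : ℕ) (hh : h ≠ 0)
    (hnk : n ≤ k) (hkn : k ≤ n + 2)
    (h1 : b ^ k ≤ 1 / (2 * |h|)) (h2 : 1 / (2 * |h|) < b ^ (k + 1)) :
    2 / b ^ 3 * |h| ^ β ≤ 2 * b ^ (-β * (n:ℝ)) * |Real.sin (Real.pi * (b ^ n * h))| := by
  have hp : 0 < |h| := abs_pos.2 hh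
  have hb0 : 0 < b := by linarith
  have hpi := Real.pi_pos
  rw [le_div_iff₀ (by positivity)] at h1
  rw [div_lt_iff₀ (by positivity)] at h2
  have hnk' : b ^ n ≤ b ^ k := pow_le_pow_right₀ hb.le hnk
  have hkn' : b ^ (k+1) ≤ b ^ n * b ^ 3 := by
    rw [← pow_add]; exact pow_le_pow_right₀ hb.le (by omega)
  have hbn : 0 < b ^ n := by positivity
  set t := b ^ n * |h| with ht
  have ht0 : 0 < t := by positivity
  have ht1 : t ≤ 1/2 := by nlinarith
  have ht2 : 1 / (2 * b ^ 3) ≤ t := by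
    rw [div_le_iff₀ (by positivity)]
    nlinarith
  have hsin : 2 * t ≤ |Real.sin (Real.pi * (b ^ n * h))| := by
    have e : |Real.sin (Real.pi * (b ^ n * h))| = Real.sin (Real.pi * t) := by
      have hpos : 0 ≤ Real.sin (Real.pi * t) :=
        Real.sin_nonneg_of_nonneg_of_le_pi (by positivity) (by nlinarith)
      rcases abs_cases h with ⟨h', _⟩ | ⟨h', _⟩
      · rw [ht, h'] at hpos ⊢; exact abs_of_nonneg hpos
      · rw [ht, h'] at hpos ⊢
        rw [show Real.pi * (b ^ n * h) = -(Real.pi * (b ^ n * -h)) by ring, Real.sin_neg, abs_neg]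
        exact abs_of_nonneg hpos
    rw [e]
    have := Real.mul_le_sin (x := Real.pi * t) (by positivity) (by nlinarith)
    calc 2 * t = 2 / Real.pi * (Real.pi * t) := by field_simp
      _ ≤ _ := this
  have hpw : |h| ^ β ≤ b ^ (-β * (n:ℝ)) := by
    have e : b ^ (-β * (n:ℝ)) = ((b ^ n)⁻¹) ^ β := by
      rw [neg_mul, mul_comm, Real.rpow_neg hb0.le, Real.rpow_mul hb0.le, Real.rpow_natCast,
        Real.inv_rpow (by positivity)]
    rw [e]
    apply Real.rpow_le_rpow hp.le _ hβ.le
    rw [← one_div, le_div_iff₀ hbn]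
    linarith
  have hA : 0 < |h| ^ β := by positivity
  have h3 : 1 / b ^ 3 ≤ |Real.sin (Real.pi * (b ^ n * h))| := by
    refine le_trans ?_ hsin
    have : 1 / (2 * b^3) = 1 / b ^ 3 / 2 := by field_simp
    linarith
  calc 2 / b ^ 3 * |h| ^ β = 2 * |h| ^ β * (1 / b ^ 3) := by ring
    _ ≤ _ := by gcongr

lemma ZZ_h (μ : Measure (ℕ → ℝ)) (hμ : IsUniformProductMeasure μ) (b β h : ℝ) (hb : 1 < b)
    (hβ : 0 < β) (hh : h ≠ 0) (hsm : 2 * b ^ 2 * |h| ≤ 1) (q r : ℕ → ℝ)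
    (hq : ∀ n, |q n| = 2 * b ^ (-β * (n:ℝ)) * |Real.sin (Real.pi * (b ^ n * h))|)
    (g : ℝ → ℝ≥0∞) (hg : Measurable g) :
    ∫⁻ Θ, g (ZZ q r Θ) ∂μ ≤ (∫⁻ u, EE u ^ 3) ^ 2 * (3 * ENNReal.ofReal (b ^ 3 / 2 * |h| ^ (-β)))
      * ∫⁻ u, g u := by
  have hp : 0 < |h| := abs_pos.2 hh
  have hb0 : 0 < b := by linarith
  have hb2 : 1 ≤ b ^ 2 := one_le_pow₀ hb.le
  have hx : b ^ 2 ≤ 1 / (2 * |h|) := by rw [le_div_iff₀ (by positivity)]; linarith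
  obtain ⟨k, hk1, hk2⟩ := exists_nat_pow_near (hb2.trans hx) hb
  have hk : 2 < k + 1 := (pow_lt_pow_iff_right₀ hb).1 (lt_of_le_of_lt hx hk2)
  have hsum : Summable fun n => ‖q n‖ := by
    refine Summable.of_nonneg_of_le (fun n => norm_nonneg _) (fun n => ?_) ((geo b β hb hβ).mul_left 2)
    rw [Real.norm_eq_abs, hq n]
    exact mul_le_of_le_one_right (by positivity) (Real.abs_sin_le_one _)
  have low : ∀ n, n ≤ k → k ≤ n + 2 → 2 / b ^ 3 * |h| ^ β ≤ |q n| := by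
    intro n h1 h2
    rw [hq n]
    exact q_lower b β h hb hβ n k hh h1 h2 hk1 hk2
  have hpos : 0 < 2 / b ^ 3 * |h| ^ β := by positivity
  have ne : ∀ n, n ≤ k → k ≤ n + 2 → q n ≠ 0 := fun n h1 h2 =>
    abs_pos.1 (hpos.trans_le (low n h1 h2))
  have inv : ∀ n, n ≤ k → k ≤ n + 2 →
      ENNReal.ofReal |(q n)⁻¹| ≤ ENNReal.ofReal (b ^ 3 / 2 * |h| ^ (-β)) := by
    intro n h1 h2
    apply ENNReal.ofReal_le_ofReal
    rw [abs_inv]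
    refine (inv_anti₀ hpos (low n h1 h2)).trans (le_of_eq ?_)
    rw [Real.rpow_neg hp.le, mul_inv, inv_div]
  refine (ZZ_bound μ hμ q r hsum (k-2) (k-1) k (by omega) (by omega) (by omega)
    (ne _ (by omega) (by omega)) (ne _ (by omega) (by omega)) (ne _ (by omega) (by omega)) g hg).trans ?_
  gcongr
  refine (add_le_add (add_le_add (inv _ (by omega) (by omega)) (inv _ (by omega) (by omega)))
    (inv _ (by omega) (by omega))).trans (le_of_eq ?_)
  ring

lemma W1_cont (b β : ℝ) (hb : 1 < b) (hβ : 0 < β) :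
    Continuous fun p : (ℕ → ℝ) × ℝ => W1 b β p.1 p.2 := by
  unfold W1
  refine continuous_tsum (fun n => by fun_prop) (geo b β hb hβ) (fun n p => ?_)
  rw [norm_mul, Real.norm_of_nonneg (Real.rpow_nonneg (by linarith) _)]
  exact mul_le_of_le_one_right (Real.rpow_nonneg (by linarith) _) (Real.abs_cos_le_one _)

lemma W2_cont (b β : ℝ) (hb : 1 < b) (hβ : 0 < β) :
    Continuous fun p : (ℕ → ℝ) × ℝ => W2 b β p.1 p.2 := by
  unfold W2
  refine continuous_tsum (fun n => by fun_prop) (geo b β hb hβ) (fun n p => ?_)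
  rw [norm_mul, Real.norm_of_nonneg (Real.rpow_nonneg (by linarith) _)]
  exact mul_le_of_le_one_right (Real.rpow_nonneg (by linarith) _) (Real.abs_sin_le_one _)

lemma W1_meas (b β : ℝ) (hb : 1 < b) (hβ : 0 < β) {X : Type*} [MeasurableSpace X]
    (f : X → ℕ → ℝ) (g : X → ℝ) (hf : Measurable f) (hg : Measurable g) :
    Measurable fun a => W1 b β (f a) (g a) := by
  have h0 : Measurable (fun a => (f a, g a)) := hf.prodMk hg
  have h1 : Measurable (fun p : (ℕ → ℝ) × ℝ => W1 b β p.1 p.2) := by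
    have h2 := W1_cont b β hb hβ
    generalize (fun p : (ℕ → ℝ) × ℝ => W1 b β p.1 p.2) = F at h2 ⊢
    exact h2.measurable
  have h3 := h1.comp h0
  exact h3

lemma W2_meas (b β : ℝ) (hb : 1 < b) (hβ : 0 < β) {X : Type*} [MeasurableSpace X]
    (f : X → ℕ → ℝ) (g : X → ℝ) (hf : Measurable f) (hg : Measurable g) :
    Measurable fun a => W2 b β (f a) (g a) := by
  have h0 : Measurable (fun a => (f a, g a)) := hf.prodMk hg
  have h1 : Measurable (fun p : (ℕ → ℝ) × ℝ => W2 b β p.1 p.2) := by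
    have h2 := W2_cont b β hb hβ
    generalize (fun p : (ℕ → ℝ) × ℝ => W2 b β p.1 p.2) = F at h2 ⊢
    exact h2.measurable
  have h3 := h1.comp h0
  exact h3

lemma W1_sub (b β : ℝ) (hb : 1 < b) (hβ : 0 < β) (Θ : ℕ → ℝ) (x y : ℝ) :
    W1 b β Θ x - W1 b β Θ y =
      ZZ (fun n => -2 * b ^ (-β * (n:ℝ)) * Real.sin (Real.pi * (b ^ n * (x - y))))
        (fun n => b ^ n * (x + y) / 2) Θ := by
  have hs : ∀ t, Summable fun n : ℕ =>
      b ^ (-β * (n : ℝ)) * Real.cos (2 * Real.pi * (b ^ n * t + Θ n)) := by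
    intro t
    refine Summable.of_norm_bounded (geo b β hb hβ) (fun n => ?_)
    rw [norm_mul, Real.norm_of_nonneg (Real.rpow_nonneg (by linarith) _)]
    exact mul_le_of_le_one_right (Real.rpow_nonneg (by linarith) _) (Real.abs_cos_le_one _)
  unfold W1 ZZ
  rw [← (hs x).tsum_sub (hs y)]
  refine tsum_congr fun n => ?_
  rw [← mul_sub, Real.cos_sub_cos]
  have e1 : (2 * Real.pi * (b ^ n * x + Θ n) + 2 * Real.pi * (b ^ n * y + Θ n)) / 2
    = 2 * Real.pi * (Θ n + b ^ n * (x + y) / 2) := by ring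
  have e2 : (2 * Real.pi * (b ^ n * x + Θ n) - 2 * Real.pi * (b ^ n * y + Θ n)) / 2
    = Real.pi * (b ^ n * (x - y)) := by ring
  rw [e1, e2]; ring

lemma W2_sub (b β : ℝ) (hb : 1 < b) (hβ : 0 < β) (Θ : ℕ → ℝ) (x y : ℝ) :
    W2 b β Θ x - W2 b β Θ y =
      ZZ (fun n => 2 * b ^ (-β * (n:ℝ)) * Real.sin (Real.pi * (b ^ n * (x - y))))
        (fun n => b ^ n * (x + y) / 2 + 1 / 4) Θ := by
  have hs : ∀ t, Summable fun n : ℕ =>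
      b ^ (-β * (n : ℝ)) * Real.sin (2 * Real.pi * (b ^ n * t + Θ n)) := by
    intro t
    refine Summable.of_norm_bounded (geo b β hb hβ) (fun n => ?_)
    rw [norm_mul, Real.norm_of_nonneg (Real.rpow_nonneg (by linarith) _)]
    exact mul_le_of_le_one_right (Real.rpow_nonneg (by linarith) _) (Real.abs_sin_le_one _)
  unfold W2 ZZ
  rw [← (hs x).tsum_sub (hs y)]
  refine tsum_congr fun n => ?_
  rw [← mul_sub, Real.sin_sub_sin]
  have e1 : 2 * Real.pi * (Θ n + (b ^ n * (x + y) / 2 + 1 / 4)) =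
    (2 * Real.pi * (b ^ n * x + Θ n) + 2 * Real.pi * (b ^ n * y + Θ n)) / 2 + Real.pi / 2 := by ring
  have e2 : (2 * Real.pi * (b ^ n * x + Θ n) - 2 * Real.pi * (b ^ n * y + Θ n)) / 2
    = Real.pi * (b ^ n * (x - y)) := by ring
  rw [e1, e2, Real.sin_add_pi_div_two]; ring

/-- one dimensional kernel -/
noncomputable def GG (s h u : ℝ) : ℝ≥0∞ := ENNReal.ofReal ((h ^ 2 + u ^ 2) ^ (-(s / 4)))

lemma GG_meas (s h : ℝ) : Measurable (GG s h) := by unfold GG; fun_prop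

lemma GG_fin (s : ℝ) (hs : 2 < s) : ∫⁻ u, GG s 1 u < ⊤ := by
  have h := integrable_rpow_neg_one_add_norm_sq (E := ℝ) (μ := volume) (r := s / 2)
    (by simp; linarith)
  have h2 := h.lintegral_lt_top
  refine lt_of_le_of_lt (le_of_eq ?_) h2
  refine lintegral_congr fun u => ?_
  unfold GG
  rw [Real.norm_eq_abs, sq_abs]
  congr 2
  · norm_num
  · ring

lemma GG_int (s h : ℝ) (hh : h ≠ 0) :
    ∫⁻ u, GG s h u = ENNReal.ofReal (|h| ^ (1 - s / 2)) * ∫⁻ u, GG s 1 u := by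
  have hp : 0 < |h| := abs_pos.2 hh
  have e := lint_scale (GG s h) (GG_meas s h) 0 |h| hp.ne'
  have e2 : ∀ w, GG s h (0 + |h| * w) = ENNReal.ofReal (|h| ^ (-(s/2))) * GG s 1 w := by
    intro w
    unfold GG
    rw [← ENNReal.ofReal_mul (by positivity)]
    congr 1
    have : h ^ 2 + (0 + |h| * w) ^ 2 = |h| ^ (2:ℝ) * (1 ^ 2 + w ^ 2) := by
      rw [Real.rpow_two, zero_add, mul_pow, sq_abs]; ring
    rw [this, Real.mul_rpow (by positivity) (by positivity), ← Real.rpow_mul hp.le]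
    ring_nf
  simp_rw [e2] at e
  rw [lintegral_const_mul _ (GG_meas s 1), abs_of_pos (inv_pos.2 hp)] at e
  have e3 : ENNReal.ofReal |h| * (ENNReal.ofReal (|h| ^ (-(s/2))) * ∫⁻ u, GG s 1 u)
      = ∫⁻ u, GG s h u := by
    rw [e, ← mul_assoc, ← ENNReal.ofReal_mul hp.le, mul_inv_cancel₀ hp.ne']; simp
  rw [← e3, ← mul_assoc, ← ENNReal.ofReal_mul hp.le, sub_eq_add_neg, Real.rpow_add hp, Real.rpow_one]

lemma GG_split (s h u v : ℝ) (hs : 2 < s) (hh : h ≠ 0) :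
    ENNReal.ofReal ((h ^ 2 + (u ^ 2 + v ^ 2)) ^ (-(s / 2))) ≤ GG s h u * GG s h v := by
  have h0 : 0 < h ^ 2 := by positivity
  unfold GG
  rw [← ENNReal.ofReal_mul (by positivity), ← Real.mul_rpow (by positivity) (by positivity)]
  apply ENNReal.ofReal_le_ofReal
  have e : (h ^ 2 + (u ^ 2 + v ^ 2)) ^ (-(s / 2)) =
      ((h ^ 2 + (u ^ 2 + v ^ 2)) ^ 2) ^ (-(s / 4)) := by
    rw [← Real.rpow_natCast (h ^ 2 + (u ^ 2 + v ^ 2)) 2, ← Real.rpow_mul (by positivity)]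
    congr 1; push_cast; ring
  rw [e]
  apply Real.rpow_le_rpow_of_nonpos (by positivity) _ (by linarith)
  nlinarith [mul_nonneg (sq_nonneg u) (sq_nonneg v), mul_nonneg h0.le (sq_nonneg u),
    mul_nonneg h0.le (sq_nonneg v), sq_nonneg (u^2), sq_nonneg (v^2)]

lemma Wdist_sq (b β : ℝ) (Θ Λ : ℕ → ℝ) (x y : ℝ) : Wdist b β Θ Λ x y ^ 2 =
    (W1 b β Θ x - W1 b β Θ y) ^ 2 + (W2 b β Λ x - W2 b β Λ y) ^ 2 :=
  Real.sq_sqrt (by positivity)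

lemma unif_prob (μ : Measure (ℕ → ℝ)) (hμ : IsUniformProductMeasure μ) : IsProbabilityMeasure μ := by
  have hP : IsProbabilityMeasure (volume.restrict (Icc (0:ℝ) 1)) := ⟨by simp⟩
  rw [unif_eq μ hμ]; infer_instance

lemma inner_bound (b β s : ℝ) (hb : 1 < b) (hβ : 0 < β) (hs : 2 < s)
    (μ : Measure (ℕ → ℝ)) (hμ : IsUniformProductMeasure μ) :
    ∃ K : ℝ≥0∞, K ≠ ⊤ ∧ ∀ x y : ℝ, x ≠ y → |x - y| ≤ 1 →
      ∫⁻ p, ENNReal.ofReal (((x - y) ^ 2 + (Wdist b β p.1 p.2 x y) ^ 2) ^ (-(s / 2))) ∂(μ.prod μ)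
        ≤ K * singK (2 - s - 2 * β) (x - y) + K := by
  have := unif_prob μ hμ
  set M := ∫⁻ u, EE u ^ 3
  have hM : M ≠ ⊤ := EE_fin.ne
  set C0 := ∫⁻ u, GG s 1 u
  have hC0 : C0 ≠ ⊤ := (GG_fin s hs).ne
  set L := (M ^ 2 * 3 * ENNReal.ofReal (b ^ 3 / 2) * C0) ^ 2 with hL
  have hLt : L ≠ ⊤ := by
    rw [hL]
    exact ENNReal.pow_ne_top (ENNReal.mul_ne_top (ENNReal.mul_ne_top (ENNReal.mul_ne_top
      (ENNReal.pow_ne_top hM) (by norm_num)) ENNReal.ofReal_ne_top) hC0)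
  refine ⟨L + ENNReal.ofReal ((2 * b ^ 2) ^ s), ENNReal.add_ne_top.2 ⟨hLt, ENNReal.ofReal_ne_top⟩, ?_⟩
  intro x y hxy hle
  have hh : x - y ≠ 0 := sub_ne_zero.2 hxy
  set h := x - y with hdef
  have hp : 0 < |h| := abs_pos.2 hh
  have hb0 : 0 < b := by linarith
  by_cases hsm : 2 * b ^ 2 * |h| ≤ 1
  · refine le_trans ?_ le_self_add
    refine le_trans (b := L * singK (2 - s - 2 * β) h) ?_ (by gcongr; exact le_self_add)
    have hm1 : Measurable fun Θ => W1 b β Θ x - W1 b β Θ y := by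
      exact (W1_meas b β hb hβ _ _ measurable_id measurable_const).sub
        (W1_meas b β hb hβ _ _ measurable_id measurable_const)
    have hm2 : Measurable fun Θ => W2 b β Θ x - W2 b β Θ y := by
      exact (W2_meas b β hb hβ _ _ measurable_id measurable_const).sub
        (W2_meas b β hb hβ _ _ measurable_id measurable_const)
    have b1 : ∫⁻ Θ, GG s h (W1 b β Θ x - W1 b β Θ y) ∂μ ≤
        M ^ 2 * (3 * ENNReal.ofReal (b ^ 3 / 2 * |h| ^ (-β))) * ∫⁻ u, GG s h u := by
      simp_rw [W1_sub b β hb hβ]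
      refine ZZ_h μ hμ b β h hb hβ hh hsm _ _ (fun n => ?_) _ (GG_meas s h)
      rw [abs_mul, abs_mul, abs_of_pos (Real.rpow_pos_of_pos hb0 _)]; norm_num [hdef]
    have b2 : ∫⁻ Θ, GG s h (W2 b β Θ x - W2 b β Θ y) ∂μ ≤
        M ^ 2 * (3 * ENNReal.ofReal (b ^ 3 / 2 * |h| ^ (-β))) * ∫⁻ u, GG s h u := by
      simp_rw [W2_sub b β hb hβ]
      refine ZZ_h μ hμ b β h hb hβ hh hsm _ _ (fun n => ?_) _ (GG_meas s h)
      rw [abs_mul, abs_mul, abs_of_pos (Real.rpow_pos_of_pos hb0 _)]; norm_num [hdef]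
    calc _ ≤ ∫⁻ p, GG s h (W1 b β p.1 x - W1 b β p.1 y) * GG s h (W2 b β p.2 x - W2 b β p.2 y)
            ∂(μ.prod μ) := by
          refine lintegral_mono fun p => ?_
          simp only [Wdist_sq]
          exact GG_split s h _ _ hs hh
      _ = (∫⁻ Θ, GG s h (W1 b β Θ x - W1 b β Θ y) ∂μ) * ∫⁻ Θ, GG s h (W2 b β Θ x - W2 b β Θ y) ∂μ :=
          lintegral_prod_mul (f := fun Θ => GG s h (W1 b β Θ x - W1 b β Θ y))
            (g := fun Θ => GG s h (W2 b β Θ x - W2 b β Θ y))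
            ((GG_meas s h).comp hm1).aemeasurable ((GG_meas s h).comp hm2).aemeasurable
      _ ≤ (M ^ 2 * (3 * ENNReal.ofReal (b ^ 3 / 2 * |h| ^ (-β))) * ∫⁻ u, GG s h u) *
          (M ^ 2 * (3 * ENNReal.ofReal (b ^ 3 / 2 * |h| ^ (-β))) * ∫⁻ u, GG s h u) :=
          mul_le_mul' b1 b2
      _ = L * (ENNReal.ofReal (|h| ^ (-β)) * ENNReal.ofReal (|h| ^ (1 - s / 2))) ^ 2 := by
          rw [GG_int s h hh, ENNReal.ofReal_mul (by positivity), hL]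
          ring
      _ = L * singK (2 - s - 2 * β) h := by
          congr 1
          unfold singK
          have hmem : |h| ∈ Ioc (0:ℝ) 2 := ⟨hp, by linarith⟩
          rw [indicator_of_mem hmem, ← ENNReal.ofReal_mul (by positivity),
            ← Real.rpow_add hp, ← ENNReal.ofReal_pow (by positivity), ← Real.rpow_natCast,
            ← Real.rpow_mul hp.le]
          congr 2; push_cast; ring
  · refine le_trans ?_ le_add_self
    refine le_trans ?_ le_add_self
    refine le_trans (lintegral_mono (g := fun _ => ENNReal.ofReal ((2 * b ^ 2) ^ s)) fun p => ?_)
      (by simp)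
    apply ENNReal.ofReal_le_ofReal
    push Not at hsm
    have e : (2 * b ^ 2) ^ s = (((2 * b ^ 2)⁻¹) ^ 2) ^ (-(s/2)) := by
      rw [← Real.rpow_natCast ((2 * b ^ 2)⁻¹) 2, ← Real.rpow_mul (by positivity), Real.inv_rpow (by positivity),
        ← Real.rpow_neg (by positivity)]
      congr 1; push_cast; ring
    rw [e]
    apply Real.rpow_le_rpow_of_nonpos (by positivity) _ (by linarith)
    have h3 : (2 * b ^ 2)⁻¹ ≤ |h| := by
      rw [inv_le_iff_one_le_mul₀ (by positivity)]; linarith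
    have h4 : ((2 * b ^ 2)⁻¹) ^ 2 ≤ |h| ^ 2 := by gcongr
    rw [sq_abs] at h4
    nlinarith [sq_nonneg (Wdist b β p.1 p.2 x y)]

lemma main_aux (b β s : ℝ) (hb : 1 < b) (hβ : β ∈ Set.Ioo (0 : ℝ) (1 / 2))
    (hs : s ∈ Set.Ioo (2 : ℝ) (3 - 2 * β))
    (μ : Measure (ℕ → ℝ)) (hμ : IsUniformProductMeasure μ) :
    (∫⁻ p, (∫⁻ x in Set.Icc (0 : ℝ) 1, ∫⁻ y in Set.Icc (0 : ℝ) 1,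
        ENNReal.ofReal
          (((x - y) ^ 2 + (Wdist b β p.1 p.2 x y) ^ 2) ^ (-(s / 2)))) ∂ μ.prod μ)
      < ⊤ := by
  have := unif_prob μ hμ
  obtain ⟨K, hK, hKb⟩ := inner_bound b β s hb hβ.1 hs.1 μ hμ
  have hmeas : Measurable fun z : (((ℕ → ℝ) × (ℕ → ℝ)) × ℝ) × ℝ =>
      ENNReal.ofReal (((z.1.2 - z.2) ^ 2 + (Wdist b β z.1.1.1 z.1.1.2 z.1.2 z.2) ^ 2) ^ (-(s / 2))) := by
    simp only [Wdist_sq]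
    have m1 : Measurable fun z : (((ℕ → ℝ) × (ℕ → ℝ)) × ℝ) × ℝ => W1 b β z.1.1.1 z.1.2 :=
      W1_meas b β hb hβ.1 _ _ (by fun_prop) (by fun_prop)
    have m2 : Measurable fun z : (((ℕ → ℝ) × (ℕ → ℝ)) × ℝ) × ℝ => W1 b β z.1.1.1 z.2 :=
      W1_meas b β hb hβ.1 _ _ (by fun_prop) (by fun_prop)
    have m3 : Measurable fun z : (((ℕ → ℝ) × (ℕ → ℝ)) × ℝ) × ℝ => W2 b β z.1.1.2 z.1.2 :=
      W2_meas b β hb hβ.1 _ _ (by fun_prop) (by fun_prop)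
    have m4 : Measurable fun z : (((ℕ → ℝ) × (ℕ → ℝ)) × ℝ) × ℝ => W2 b β z.1.1.2 z.2 :=
      W2_meas b β hb hβ.1 _ _ (by fun_prop) (by fun_prop)
    fun_prop
  have hmeas2 : Measurable (Function.uncurry fun (p : (ℕ → ℝ) × (ℕ → ℝ)) (x : ℝ) =>
      ∫⁻ y in Set.Icc (0 : ℝ) 1, ENNReal.ofReal
        (((x - y) ^ 2 + (Wdist b β p.1 p.2 x y) ^ 2) ^ (-(s / 2)))) :=
    Measurable.lintegral_prod_right' hmeas
  have hmeasx : ∀ x : ℝ, Measurable (Function.uncurry fun (p : (ℕ → ℝ) × (ℕ → ℝ)) (y : ℝ) =>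
      ENNReal.ofReal (((x - y) ^ 2 + (Wdist b β p.1 p.2 x y) ^ 2) ^ (-(s / 2)))) := by
    intro x
    have hc : Measurable fun w : ((ℕ → ℝ) × (ℕ → ℝ)) × ℝ => ((w.1, x), w.2) := by fun_prop
    have h3 := hmeas.comp hc
    exact h3
  rw [lintegral_lintegral_swap hmeas2.aemeasurable]
  have hS := singK_fin (2 - s - 2 * β) (by linarith [hs.2])
  have hSm := singK_meas (2 - s - 2 * β)
  have step : ∀ x ∈ Icc (0:ℝ) 1, ∫⁻ p, (∫⁻ y in Set.Icc (0 : ℝ) 1,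
        ENNReal.ofReal (((x - y) ^ 2 + (Wdist b β p.1 p.2 x y) ^ 2) ^ (-(s / 2)))) ∂ μ.prod μ
      ≤ K * (∫⁻ t, singK (2 - s - 2 * β) t) + K := by
    intro x hx
    rw [lintegral_lintegral_swap (hmeasx x).aemeasurable]
    calc _ ≤ ∫⁻ y in Icc (0:ℝ) 1, (K * singK (2 - s - 2 * β) (x - y) + K) := by
          refine lintegral_mono_ae ?_
          have hne : ∀ᵐ y ∂(volume.restrict (Icc (0:ℝ) 1)), y ≠ x :=
            ae_restrict_of_ae (Measure.ae_ne volume x)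
          filter_upwards [hne, ae_restrict_mem measurableSet_Icc] with y hy hy2
          exact hKb x y hy.symm (abs_le.2 ⟨by linarith [hx.1, hy2.2], by linarith [hx.2, hy2.1]⟩)
      _ = K * (∫⁻ y in Icc (0:ℝ) 1, singK (2 - s - 2 * β) (x - y)) + K := by
          rw [lintegral_add_right _ measurable_const, lintegral_const_mul _ (by fun_prop)]
          simp
      _ ≤ K * (∫⁻ y, singK (2 - s - 2 * β) (x - y)) + K := by
          gcongr
          exact Measure.restrict_le_self
      _ = _ := by rw [lintegral_sub_left_eq_self]
  refine lt_of_le_of_lt (setLIntegral_mono measurable_const step) ?_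
  simp only [lintegral_const, Measure.restrict_apply MeasurableSet.univ, univ_inter, Real.volume_Icc]
  have : K * (∫⁻ t, singK (2 - s - 2 * β) t) + K < ⊤ :=
    ENNReal.add_lt_top.2 ⟨ENNReal.mul_lt_top hK.lt_top hS, hK.lt_top⟩
  simpa using this

end aux

/-- for `s ∈ (2, 3-2β)`, the expectation over `(Θ,Λ)` of the `s`-energy
`I_s(μ_{Θ,Λ}) = ∫₀¹∫₀¹ ((x-y)² + |f(x)-f(y)|²)^{-s/2} dx dy` is finite. -/
theorem stmt_6 (b β s : ℝ) (hb : 1 < b) (hβ : β ∈ Set.Ioo (0 : ℝ) (1 / 2))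
    (hs : s ∈ Set.Ioo (2 : ℝ) (3 - 2 * β))
    (μ : Measure (ℕ → ℝ)) (hμ : IsUniformProductMeasure μ) :
    (∫⁻ p, (∫⁻ x in Set.Icc (0 : ℝ) 1, ∫⁻ y in Set.Icc (0 : ℝ) 1,
        ENNReal.ofReal
          (((x - y) ^ 2 + (Wdist b β p.1 p.2 x y) ^ 2) ^ (-(s / 2)))) ∂ μ.prod μ)
      < ⊤ := by
  exact main_aux b β s hb hβ hs μ hμ
end
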